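/- Let G = ⟨X; Rⁿ⟩ be a one-relator group with torsion on a finite generating set X, and let Ĝ = ⟨X; R⟩ be the associated torsion-free one-relator group (the quotient of G by the normal closure of the image of R). Then G admits a decomposition as a free product of two nontrivial groups if and only if Ĝ is infinite cyclic or Ĝ admits a decomposition as a free product of two nontrivial groups. (This is the free-product reformulation, via Stallings' theorem and Fischer–Karrass–Solitar, of the statement: G is infinitely ended if and only if Ĝ is infinitely ended or infinite cyclic; otherwise both G and Ĝ are one-ended.) -/

import Mathlib

/-- A group is *virtually-ℤ* if it has a finite-index subgroup isomorphic to `ℤ`. -/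
def VirtuallyZ (G : Type*) [Group G] : Prop :=
  ∃ H : Subgroup G, H.FiniteIndex ∧ Nonempty (H ≃* Multiplicative ℤ)

/-- A subgroup `M` of `G` is *malnormal* if `g M g⁻¹ ∩ M ≠ 1` implies `g ∈ M`. -/
def Subgroup.IsMalnormal {G : Type*} [Group G] (M : Subgroup G) : Prop :=
  ∀ g : G, (∃ x : G, x ≠ 1 ∧ x ∈ M ∧ g * x * g⁻¹ ∈ M) → g ∈ M

/-- A group is a *free product of cyclic groups* if it is isomorphic to the free product
(`Monoid.CoprodI`) of a family of cyclic groups; every cyclic group is isomorphic to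
`Multiplicative (ZMod m)` for some `m : ℕ` (with `m = 0` giving the infinite cyclic group). -/
def IsFreeProductOfCyclics (G : Type*) [Group G] : Prop :=
  ∃ (ι : Type) (m : ι → ℕ),
    Nonempty (G ≃* Monoid.CoprodI fun i => Multiplicative (ZMod (m i)))

/-- A group is *freely decomposable* if it is isomorphic to a free product of two
nontrivial groups. -/
def FreelyDecomposable (G : Type*) [Group G] : Prop :=
  ∃ (H K : Type) (gH : Group H) (gK : Group K),
    Nontrivial H ∧ Nontrivial K ∧
      Nonempty (G ≃* (letI := gH; letI := gK; Monoid.Coprod H K))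

/-- A group is *freely indecomposable* if it is not isomorphic to a free product of two
nontrivial groups. -/
def FreelyIndecomposable (G : Type*) [Group G] : Prop := ¬ FreelyDecomposable G

/-
Free decomposability of `⟨X; Rⁿ⟩`, and that of `⟨X; R⟩` up to the exceptional case of `ℤ`, both mean
that `R` is conjugate into a proper free factor of the free group on `X`. If `R` is conjugate to `p`
in the factor `F(Y)` of `F(Y) ∗ F(Z)`, the quotients are `⟨Y; pⁿ⟩ ∗ F(Z)` and `⟨Y; p⟩ ∗ F(Z)`;
the leading coefficient of the Magnus expansion shows that `⟨Y; pⁿ⟩` is nontrivial, while `⟨Y; p⟩`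
may be trivial, whence the case of `ℤ`. Conversely, by Grushko's theorem a surjection of the free
group onto `A ∗ B` is induced by maps `F(Y) → A` and `F(Z) → B` for some splitting of the free group
as `F(Y) ∗ F(Z)`. When its kernel is the normal closure of a single element, one of the two maps
is injective, since otherwise leading coefficients on both sides would give that kernel two
independent conjugation-invariant homomorphisms to `ℚ`. The other map then has a nontrivial kernel,
which lies in the normal closure of `R`, and the Freiheitssatz moves `R` into its free factor.
If `⟨X; R⟩` is `ℤ`, the Euclidean algorithm gives a basis one of whose elements dies in `ℤ`, and the
Freiheitssatz applies again.
-/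

namespace OneRelator

universe u v

open PowerSeries

section Filtration

variable {B : Type*} [Ring B]

/-- The units of `B⟦X⟧` congruent to `1` modulo `X ^ (i + 1)`. With this shift all of them have
constant coefficient `1`. -/
def filtration (B : Type*) [Ring B] (i : ℕ) : Subgroup (B⟦X⟧)ˣ where
  carrier := {u | X ^ (i + 1) ∣ (u : B⟦X⟧) - 1}
  one_mem' := by simp
  mul_mem' {u v} hu hv := by
    have key : ((u * v : (B⟦X⟧)ˣ) : B⟦X⟧) - 1 = (u - 1) * v + (v - 1) := by
      rw [Units.val_mul]; noncomm_ring
    rw [Set.mem_ofPred_eq, key]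
    exact dvd_add (dvd_mul_of_dvd_left hu _) hv
  inv_mem' {u} hu := by
    have key : ((u⁻¹ : (B⟦X⟧)ˣ) : B⟦X⟧) - 1 = (u - 1) * -((u⁻¹ : (B⟦X⟧)ˣ) : B⟦X⟧) := by
      rw [mul_neg, sub_mul, u.mul_inv, one_mul, neg_sub]
    rw [Set.mem_ofPred_eq, key]
    exact dvd_mul_of_dvd_left hu _

theorem mem_filtration {i : ℕ} {u : (B⟦X⟧)ˣ} :
    u ∈ filtration B i ↔ X ^ (i + 1) ∣ (u : B⟦X⟧) - 1 := Iff.rfl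

theorem conj_sub_one_eq {i : ℕ} {u g : (B⟦X⟧)ˣ} {m : B⟦X⟧}
    (hm : (u : B⟦X⟧) - 1 = X ^ (i + 1) * m) :
    ((g * u * g⁻¹ : (B⟦X⟧)ˣ) : B⟦X⟧) - 1
      = X ^ (i + 1) * ((g : B⟦X⟧) * m * ((g⁻¹ : (B⟦X⟧)ˣ) : B⟦X⟧)) := by
  calc ((g * u * g⁻¹ : (B⟦X⟧)ˣ) : B⟦X⟧) - 1
      = (g : B⟦X⟧) * (u - 1) * ((g⁻¹ : (B⟦X⟧)ˣ) : B⟦X⟧) := by simp [mul_sub, sub_mul]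
    _ = _ := by rw [hm, ← mul_assoc (g : B⟦X⟧), ← X_pow_mul]; simp only [mul_assoc]

instance (i : ℕ) : (filtration B i).Normal where
  conj_mem _ hu _ := hu.elim fun _ hm => ⟨_, conj_sub_one_eq hm⟩

theorem filtration_antitone : Antitone (filtration B) := fun _ _ h _ hu =>
  (pow_dvd_pow X (Nat.succ_le_succ h)).trans hu

theorem constantCoeff_eq_one {i : ℕ} {u : (B⟦X⟧)ˣ} (hu : u ∈ filtration B i) :
    constantCoeff (u : B⟦X⟧) = 1 := by
  simpa [sub_eq_zero] using X_pow_dvd_iff.1 (mem_filtration.1 hu) 0 (Nat.succ_pos i)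

theorem coeff_succ_eq_constantCoeff {i : ℕ} {a m : B⟦X⟧} (h : a - 1 = X ^ (i + 1) * m) :
    coeff (i + 1) a = constantCoeff m := by
  have hm := coeff_X_pow_mul m (i + 1) 0
  rw [← h, zero_add, map_sub, coeff_one, if_neg (Nat.succ_ne_zero i), sub_zero] at hm
  rw [hm, coeff_zero_eq_constantCoeff_apply]

/-- The first coefficient of a unit congruent to `1` modulo `X ^ (i + 1)` that is not prescribed by
this congruence. -/
noncomputable def leadingCoeff (i : ℕ) : filtration B i →* Multiplicative B where
  toFun u := .ofAdd (coeff (i + 1) ((u : (B⟦X⟧)ˣ) : B⟦X⟧))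
  map_one' := by simp [coeff_one]
  map_mul' u v := by
    obtain ⟨m, hm⟩ := mem_filtration.1 u.2
    obtain ⟨k, hk⟩ := mem_filtration.1 v.2
    have key : (((u * v : filtration B i) : (B⟦X⟧)ˣ) : B⟦X⟧) - 1
        = X ^ (i + 1) * (m * ((v : (B⟦X⟧)ˣ) : B⟦X⟧) + k) := by
      rw [mul_add, ← mul_assoc, ← hm, ← hk, Subgroup.coe_mul, Units.val_mul]
      noncomm_ring
    rw [coeff_succ_eq_constantCoeff key, coeff_succ_eq_constantCoeff hm,
      coeff_succ_eq_constantCoeff hk, map_add, map_mul, constantCoeff_eq_one v.2, mul_one,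
      ofAdd_add]

theorem leadingCoeff_apply {i : ℕ} (u : filtration B i) :
    leadingCoeff i u = .ofAdd (coeff (i + 1) ((u : (B⟦X⟧)ˣ) : B⟦X⟧)) := rfl

theorem leadingCoeff_conj {i : ℕ} {g : (B⟦X⟧)ˣ} (hg : g ∈ filtration B 0) (u : filtration B i) :
    leadingCoeff i (MulAut.conjNormal g u) = leadingCoeff i u := by
  obtain ⟨m, hm⟩ := mem_filtration.1 u.2
  rw [leadingCoeff_apply, leadingCoeff_apply, MulAut.conjNormal_apply,
    coeff_succ_eq_constantCoeff (conj_sub_one_eq hm), coeff_succ_eq_constantCoeff hm,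
    map_mul constantCoeff, map_mul constantCoeff, constantCoeff_eq_one hg,
    constantCoeff_eq_one (inv_mem hg), one_mul, mul_one]

theorem leadingCoeff_eq_one_iff {i : ℕ} {u : filtration B i} :
    leadingCoeff i u = 1 ↔ (u : (B⟦X⟧)ˣ) ∈ filtration B (i + 1) := by
  rw [mem_filtration, X_pow_dvd_iff, leadingCoeff_apply, ofAdd_eq_one]
  have hlow := X_pow_dvd_iff.1 (mem_filtration.1 u.2)
  have htop : coeff (i + 1) (((u : (B⟦X⟧)ˣ) : B⟦X⟧) - 1)
      = coeff (i + 1) ((u : (B⟦X⟧)ˣ) : B⟦X⟧) := by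
    rw [map_sub, coeff_one, if_neg (Nat.succ_ne_zero i), sub_zero]
  constructor
  · intro h j hj
    rcases Nat.lt_succ_iff_lt_or_eq.1 hj with hj | rfl
    · exact hlow j hj
    · rw [htop, h]
  · intro h
    rw [← htop, h _ (Nat.lt_succ_self _)]

theorem leadingCoeff_surjective (i : ℕ) : Function.Surjective (leadingCoeff (B := B) i) := by
  intro b
  have hc : constantCoeff (1 + X ^ (i + 1) * C b.toAdd : B⟦X⟧) = ((1 : Bˣ) : B) := by simp
  let u : (B⟦X⟧)ˣ := ⟨_, invOfUnit _ 1, mul_invOfUnit _ _ hc, invOfUnit_mul _ _ hc⟩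
  have hu : (u : B⟦X⟧) - 1 = X ^ (i + 1) * C b.toAdd := add_sub_cancel_left _ _
  refine ⟨⟨u, _, hu⟩, ?_⟩
  rw [leadingCoeff_apply, coeff_succ_eq_constantCoeff hu, constantCoeff_C, ofAdd_toAdd]

theorem commute_mk_filtration {i : ℕ} {g u : (B⟦X⟧)ˣ} (hg : g ∈ filtration B 0)
    (hu : u ∈ filtration B i) :
    Commute (QuotientGroup.mk' (filtration B (i + 1)) g)
      (QuotientGroup.mk' (filtration B (i + 1)) u) := by
  rw [commute_iff_eq, ← map_mul, ← map_mul, ← mul_inv_eq_one, ← map_inv, ← map_mul,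
    ← MonoidHom.mem_ker,
    QuotientGroup.ker_mk']
  have hu' := leadingCoeff_conj hg ⟨u, hu⟩
  rw [← mul_inv_eq_one, ← map_inv, ← map_mul, leadingCoeff_eq_one_iff] at hu'
  simpa [mul_assoc] using hu'

end Filtration

section Magnus

/-- The powers of the unit `1 + a` for an element `a` of square zero. -/
noncomputable def unipotentHom {S : Type*} [Ring S] (a : S) (ha : a * a = 0) :
    Multiplicative ℤ →* Sˣ :=
  MonoidHom.toHomUnits
    { toFun := fun z => 1 + z.toAdd • a
      map_one' := by simp
      map_mul' := fun z z' => by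
        have hzero : (z.toAdd • a) * (z'.toAdd • a) = 0 := by
          rw [smul_mul_smul_comm, ha, smul_zero]
        rw [toAdd_mul, add_smul, mul_add, add_mul, add_mul, hzero]
        noncomm_ring }

theorem coe_unipotentHom {S : Type*} [Ring S] {a : S} {ha : a * a = 0} (z : Multiplicative ℤ) :
    (unipotentHom a ha z : S) = 1 + z.toAdd • a := rfl

variable {Y : Type*}

open Classical in
/-- The operator on formal combinations of words that prepends the letter `y` to the words not
beginning with `y` and annihilates the others. -/
noncomputable def prepend (y : Y) : Module.End ℚ (List Y →₀ ℚ) :=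
  Finsupp.lift (List Y →₀ ℚ) ℚ (List Y)
    (fun l => if l.head? = some y then 0 else Finsupp.single (y :: l) 1)

theorem prepend_single {y : Y} {l : List Y} (h : l.head? ≠ some y) (q : ℚ) :
    prepend y (Finsupp.single l q) = Finsupp.single (y :: l) q := by
  simp [prepend, h]

theorem prepend_mul_self (y : Y) : prepend y * prepend y = 0 := by
  refine Finsupp.lhom_ext fun l q => ?_
  by_cases h : l.head? = some y <;> simp [prepend, h]

theorem X_mul_C_prepend_mul_self (y : Y) :
    (X * C (prepend y) : (Module.End ℚ (List Y →₀ ℚ))⟦X⟧) * (X * C (prepend y)) = 0 := by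
  rw [mul_assoc, ← mul_assoc (C _), (commute_X _).eq, mul_assoc, ← map_mul, prepend_mul_self,
    map_zero, mul_zero, mul_zero]

/-- The unit `1 + z X N_y`, where `N_y` is the operator prepending `y`. -/
noncomputable def magnusPow (y : Y) :
    Multiplicative ℤ →* ((Module.End ℚ (List Y →₀ ℚ))⟦X⟧)ˣ :=
  unipotentHom (X * C (prepend y)) (X_mul_C_prepend_mul_self y)

/-- The Magnus representation of a free group, with the noncommuting variables of the Magnus
embedding realised as the operators `prepend y`. -/
noncomputable def magnus (Y : Type*) : FreeGroup Y →* ((Module.End ℚ (List Y →₀ ℚ))⟦X⟧)ˣ :=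
  FreeGroup.lift fun y => magnusPow y (.ofAdd 1)

theorem magnus_mem_filtration (w : FreeGroup Y) : magnus Y w ∈ filtration _ 0 := by
  refine FreeGroup.range_lift_le (s := filtration _ 0) ?_ ⟨w, rfl⟩
  rintro _ ⟨y, rfl⟩
  rw [SetLike.mem_coe, mem_filtration]
  simp [magnusPow, coe_unipotentHom]

/-- The product of the units `1 + z X N_y` over the syllables `(y, z)`. -/
noncomputable def syllableProd (l : List (Y × Multiplicative ℤ)) :
    (Module.End ℚ (List Y →₀ ℚ))⟦X⟧ :=
  (l.map fun p => (magnusPow p.1 p.2 : (Module.End ℚ (List Y →₀ ℚ))⟦X⟧)).prod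

theorem coeff_succ_syllableProd_cons (p : Y × Multiplicative ℤ) (l : List (Y × Multiplicative ℤ))
    (j : ℕ) :
    coeff (j + 1) (syllableProd (p :: l)) =
      coeff (j + 1) (syllableProd l) + p.2.toAdd • (prepend p.1 * coeff j (syllableProd l)) := by
  rw [syllableProd, List.map_cons, List.prod_cons, ← syllableProd, magnusPow, coe_unipotentHom,
    add_mul, one_mul, map_add, smul_mul_assoc, map_zsmul, mul_assoc, coeff_succ_X_mul, coeff_C_mul]

theorem coeff_syllableProd_of_length_lt (l : List (Y × Multiplicative ℤ)) {j : ℕ}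
    (hj : l.length < j) : coeff j (syllableProd l) = 0 := by
  induction l generalizing j with
  | nil => simp [syllableProd, coeff_one, (List.length_nil ▸ hj).ne']
  | cons p l ih =>
    obtain ⟨j, rfl⟩ := Nat.exists_eq_succ_of_ne_zero (Nat.ne_zero_of_lt hj)
    have hj : l.length < j := by simpa using hj
    rw [coeff_succ_syllableProd_cons, ih hj, ih (hj.trans (Nat.lt_succ_self j))]
    simp

theorem coeff_length_syllableProd {l : List (Y × Multiplicative ℤ)} (h1 : ∀ p ∈ l, p.2 ≠ 1)
    (hl : l.IsChain fun p q => p.1 ≠ q.1) :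
    ∃ q : ℚ, q ≠ 0 ∧ coeff l.length (syllableProd l) (Finsupp.single [] 1) =
      Finsupp.single (l.map Prod.fst) q := by
  induction l with
  | nil => exact ⟨1, one_ne_zero, by simp [syllableProd]⟩
  | cons p l ih =>
    obtain ⟨q, hq, hcoeff⟩ := ih (fun r hr => h1 r (List.mem_cons_of_mem _ hr)) hl.of_cons
    have hhead : (l.map Prod.fst).head? ≠ some p.1 := by
      cases l with
      | nil => simp
      | cons r l => simpa [eq_comm] using (List.isChain_cons_cons.1 hl).1
    have hp : p.2.toAdd ≠ 0 := h1 p List.mem_cons_self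
    refine ⟨p.2.toAdd * q, mul_ne_zero (Int.cast_ne_zero.2 hp) hq, ?_⟩
    rw [List.length_cons, coeff_succ_syllableProd_cons,
      coeff_syllableProd_of_length_lt l (Nat.lt_succ_self _), zero_add, LinearMap.smul_apply,
      Module.End.mul_apply, hcoeff, prepend_single hhead, List.map_cons, Finsupp.smul_single,
      zsmul_eq_mul]

theorem exists_magnus_eq_syllableProd {w : FreeGroup Y} (hw : w ≠ 1) :
    ∃ l : List (Y × Multiplicative ℤ), l ≠ [] ∧ (∀ p ∈ l, p.2 ≠ 1) ∧
      (l.IsChain fun p q => p.1 ≠ q.1) ∧ (magnus Y w : (Module.End ℚ (List Y →₀ ℚ))⟦X⟧) =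
        syllableProd l := by
  classical
  let W := Monoid.CoprodI.Word.equiv (freeGroupEquivCoprodI w)
  have hW : W.prod = freeGroupEquivCoprodI w := Monoid.CoprodI.Word.equiv.left_inv _
  let e : FreeGroup Unit ≃* Multiplicative ℤ := FreeGroup.mulEquivIntOfUnique
  let syl : (Σ _ : Y, FreeGroup Unit) → Y × Multiplicative ℤ := fun s => (s.1, e s.2)
  let φ := Monoid.CoprodI.lift fun y : Y => (magnusPow y).comp e.toMonoidHom
  have hφ : φ.comp (freeGroupEquivCoprodI (ι := Y)).toMonoidHom = magnus Y := by
    ext y : 1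
    simp [φ, e, magnus, freeGroupEquivCoprodI, FreeGroup.mulEquivIntOfUnique,
      FreeGroup.equivIntOfUnique]
  refine ⟨W.toList.map syl, ?_, ?_, ?_, ?_⟩
  · intro h
    refine hw (freeGroupEquivCoprodI.injective ?_)
    rw [← hW, map_one, Monoid.CoprodI.Word.prod, List.map_eq_nil_iff.1 h, List.map_nil,
      List.prod_nil]
  · simp only [List.mem_map, forall_exists_index, and_imp]
    rintro _ s hs rfl
    exact e.map_eq_one_iff.not.2 (W.ne_one s hs)
  · rw [List.isChain_map]
    exact W.chain_ne
  · rw [← hφ, MonoidHom.comp_apply, MulEquiv.toMonoidHom_eq_coe, MonoidHom.coe_coe, ← hW,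
      Monoid.CoprodI.Word.prod, map_list_prod, syllableProd, ← Units.coeHom_apply, map_list_prod]
    simp [φ, syl, Function.comp_def]

theorem exists_magnus_notMem_filtration {w : FreeGroup Y} (hw : w ≠ 1) :
    ∃ i, magnus Y w ∉ filtration _ i := by
  obtain ⟨l, hne, h1, hl, hlw⟩ := exists_magnus_eq_syllableProd hw
  obtain ⟨q, hq, hcoeff⟩ := coeff_length_syllableProd h1 hl
  refine ⟨l.length, fun hmem => hq ?_⟩
  have h0 := X_pow_dvd_iff.1 (mem_filtration.1 hmem) l.length (Nat.lt_succ_self _)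
  rw [map_sub, coeff_one, if_neg (List.length_eq_zero_iff.not.2 hne), sub_zero, hlw] at h0
  rw [h0, LinearMap.zero_apply, eq_comm] at hcoeff
  exact Finsupp.single_eq_zero.1 hcoeff

end Magnus

open Monoid

section NormalClosure

variable {G : Type*} [Group G]

theorem self_mem_normalClosure (r : G) : r ∈ Subgroup.normalClosure {r} :=
  Subgroup.subset_normalClosure (Set.mem_singleton r)

theorem normalClosure_singleton_le {N : Subgroup G} [N.Normal] {r : G} (h : r ∈ N) :
    Subgroup.normalClosure {r} ≤ N :=
  Subgroup.normalClosure_le_normal (Set.singleton_subset_iff.2 h)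

end NormalClosure

section InvariantHom

/-- A homomorphism defined on a normal subgroup `N` of `G` is conjugation invariant if it is
constant on the `G`-conjugacy classes in `N`. -/
def ConjInvariant {G A : Type*} [Group G] [Group A] {N : Subgroup G} [N.Normal] (c : N →* A) :
    Prop :=
  ∀ g x, c (MulAut.conjNormal g x) = c x

theorem ConjInvariant.mem_zpowers {G A : Type*} [Group G] [Group A] {N : Subgroup G} [N.Normal]
    {c : N →* A} (hc : ConjInvariant c) {s x : N}
    (hx : (x : G) ∈ Subgroup.normalClosure {(s : G)}) : c x ∈ Subgroup.zpowers (c s) := by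
  let M : Subgroup G := ((Subgroup.zpowers (c s)).comap c).map N.subtype
  have hM : M.Normal := by
    refine ⟨?_⟩
    rintro _ ⟨y, hy, rfl⟩ g
    exact ⟨MulAut.conjNormal g y, by simpa [hc g y] using hy, MulAut.conjNormal_apply g y⟩
  have hsM : (s : G) ∈ M := ⟨s, Subgroup.mem_zpowers (c s), rfl⟩
  obtain ⟨y, hy, hyx⟩ := normalClosure_singleton_le hsM hx
  exact Subtype.ext hyx ▸ hy

theorem ConjInvariant.comp_subgroupComap {G H A : Type*} [Group G] [Group H] [Group A]
    {N : Subgroup H} [N.Normal] {c : N →* A} (hc : ConjInvariant c) (f : G →* H) :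
    ConjInvariant (c.comp (f.subgroupComap N)) := fun g x => by
  have h : f.subgroupComap N (MulAut.conjNormal g x)
      = MulAut.conjNormal (f g) (f.subgroupComap N x) :=
    Subtype.ext ((map_mul_inv f _ _).trans (congrArg (· * (f g)⁻¹) (map_mul f _ _)))
  rw [MonoidHom.comp_apply, MonoidHom.comp_apply, h, hc]

theorem ConjInvariant.prod_inf {G A B : Type*} [Group G] [Group A] [Group B] {M N : Subgroup G}
    [M.Normal] [N.Normal] {c : M →* A} {d : N →* B} (hc : ConjInvariant c)
    (hd : ConjInvariant d) :
    ConjInvariant ((c.comp (Subgroup.inclusion (inf_le_left : M ⊓ N ≤ M))).prod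
      (d.comp (Subgroup.inclusion (inf_le_right : M ⊓ N ≤ N)))) :=
  fun g x => Prod.ext (hc g (Subgroup.inclusion inf_le_left x))
    (hd g (Subgroup.inclusion inf_le_right x))

variable {Y : Type*}

theorem exists_le_filtration_not_le_succ {N : Subgroup (FreeGroup Y)} (hN : N ≠ ⊥) :
    ∃ i, N ≤ (filtration _ i).comap (magnus Y) ∧ ¬ N ≤ (filtration _ (i + 1)).comap (magnus Y) := by
  classical
  have hex : ∃ i, ¬ N ≤ (filtration _ i).comap (magnus Y) := by
    obtain ⟨w, hwN, hw⟩ := N.bot_or_exists_ne_one.resolve_left hN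
    exact (exists_magnus_notMem_filtration hw).imp fun i hi h => hi (h hwN)
  obtain ⟨i, hi⟩ := Nat.exists_eq_succ_of_ne_zero (n := Nat.find hex) fun h0 =>
    (Nat.find_eq_zero hex).1 h0 fun w _ => magnus_mem_filtration w
  refine ⟨i, not_not.1 (Nat.find_min hex (hi ▸ Nat.lt_succ_self i)), ?_⟩
  rw [← Nat.succ_eq_add_one, ← hi]
  exact Nat.find_spec hex

theorem exists_conjInvariant_ne_one {N : Subgroup (FreeGroup Y)} [N.Normal] (hN : N ≠ ⊥) :
    ∃ c : N →* Multiplicative ℚ, ConjInvariant c ∧ c ≠ 1 := by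
  obtain ⟨i, hi, hi'⟩ := exists_le_filtration_not_le_succ hN
  let ρ : N →* filtration _ i := ((magnus Y).comp N.subtype).codRestrict _ fun x => hi x.2
  obtain ⟨w, hwN, hw⟩ := SetLike.not_le_iff_exists.1 hi'
  have hlead : leadingCoeff i (ρ ⟨w, hwN⟩) ≠ 1 := fun h => hw (leadingCoeff_eq_one_iff.1 h)
  obtain ⟨v, hv⟩ : ∃ v, (leadingCoeff i (ρ ⟨w, hwN⟩)).toAdd v ≠ 0 := by
    by_contra! h
    exact hlead (LinearMap.ext h)
  obtain ⟨l, hl⟩ := Finsupp.ne_iff.1 hv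
  let eval : Module.End ℚ (List Y →₀ ℚ) →+ ℚ :=
    (Finsupp.applyAddHom l).comp (LinearMap.applyₗ v).toAddMonoidHom
  refine ⟨(AddMonoidHom.toMultiplicative eval).comp ((leadingCoeff i).comp ρ), fun g x => ?_,
    fun h => hl (DFunLike.congr_fun h ⟨w, hwN⟩)⟩
  have hρ : ρ (MulAut.conjNormal g x) = MulAut.conjNormal (magnus Y g) (ρ x) :=
    Subtype.ext ((map_mul_inv (magnus Y) _ _).trans
      (congrArg (· * (magnus Y g)⁻¹) (map_mul (magnus Y) _ _)))
  rw [MonoidHom.comp_apply, MonoidHom.comp_apply, hρ,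
    leadingCoeff_conj (magnus_mem_filtration g)]
  rfl

theorem notMem_normalClosure_pow {p : FreeGroup Y} (hp : p ≠ 1) {n : ℕ} (hn : 1 < n) :
    p ∉ Subgroup.normalClosure {p ^ n} := by
  intro hmem
  let N := Subgroup.normalClosure {p}
  have hpN : p ∈ N := self_mem_normalClosure _
  obtain ⟨c, hc, hc1⟩ := exists_conjInvariant_ne_one fun h : N = ⊥ =>
    hp (Subgroup.mem_bot.1 (h ▸ hpN))
  obtain ⟨k, hk⟩ := hc.mem_zpowers (s := ⟨p, hpN⟩ ^ n) (x := ⟨p, hpN⟩) (by simpa using hmem)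
  have hcp : c ⟨p, hpN⟩ = 1 := by
    have hpow : c ⟨p, hpN⟩ ^ (n * k - 1 : ℤ) = 1 := by
      rw [zpow_sub, zpow_mul, zpow_natCast, zpow_one, ← map_pow, mul_inv_eq_one]
      exact hk
    refine (IsMulTorsionFree.zpow_eq_one_iff.1 hpow).resolve_right fun h => ?_
    have := Int.eq_one_or_neg_one_of_mul_eq_one (sub_eq_zero.1 h)
    omega
  refine hc1 (MonoidHom.ext fun x => ?_)
  have := hc.mem_zpowers (s := ⟨p, hpN⟩) x.2
  rwa [hcp, Subgroup.zpowers_one_eq_bot, Subgroup.mem_bot] at this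

theorem normalClosure_pow_ne_top [Nonempty Y] (p : FreeGroup Y) {n : ℕ} (hn : 1 < n) :
    Subgroup.normalClosure {p ^ n} ≠ ⊤ := by
  intro htop
  by_cases hp : p = 1
  · rw [hp, one_pow, Subgroup.normalClosure_eq_bot_iff.2 subset_rfl] at htop
    obtain ⟨y⟩ := ‹Nonempty Y›
    exact FreeGroup.of_ne_one y (Subgroup.mem_bot.1 (htop ▸ Subgroup.mem_top _))
  · exact notMem_normalClosure_pow hp hn (htop ▸ Subgroup.mem_top p)

end InvariantHom

section FactorInjective

variable {G H A B : Type*} [Group G] [Group H] [Group A] [Group B]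

theorem fst_comp_coprodMap (α : G →* A) (β : H →* B) :
    Coprod.fst.comp (Coprod.map α β) = α.comp Coprod.fst := by
  ext <;> simp

theorem snd_comp_coprodMap (α : G →* A) (β : H →* B) :
    Coprod.snd.comp (Coprod.map α β) = β.comp Coprod.snd := by
  ext <;> simp

theorem fst_mem_ker_of_mem_ker_coprodMap {α : G →* A} {β : H →* B} {z : Coprod G H}
    (hz : z ∈ (Coprod.map α β).ker) : Coprod.fst z ∈ α.ker := by
  rw [MonoidHom.mem_ker, ← MonoidHom.comp_apply, ← fst_comp_coprodMap α β, MonoidHom.comp_apply,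
    MonoidHom.mem_ker.1 hz, map_one]

theorem snd_mem_ker_of_mem_ker_coprodMap {α : G →* A} {β : H →* B} {z : Coprod G H}
    (hz : z ∈ (Coprod.map α β).ker) : Coprod.snd z ∈ β.ker := by
  rw [MonoidHom.mem_ker, ← MonoidHom.comp_apply, ← snd_comp_coprodMap α β, MonoidHom.comp_apply,
    MonoidHom.mem_ker.1 hz, map_one]

theorem eq_one_or_eq_one_of_mem_zpowers [IsMulTorsionFree B] {p : A × B} {a : A} {b : B}
    (ha : (a, 1) ∈ Subgroup.zpowers p) (hb : (1, b) ∈ Subgroup.zpowers p) : a = 1 ∨ b = 1 := by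
  obtain ⟨k, hk⟩ := ha
  obtain ⟨l, hl⟩ := hb
  rcases IsMulTorsionFree.zpow_eq_one_iff.1 (Prod.ext_iff.1 hk).2 with h1 | rfl
  · exact .inr ((Prod.ext_iff.1 hl).2.symm.trans ((congrArg (· ^ l) h1).trans (one_zpow l)))
  · exact .inl ((Prod.ext_iff.1 hk).1.symm.trans (zpow_zero _))

/- If both kernels were nontrivial, each would have a rational invariant; together they give an
invariant of rank two on a normal subgroup generated by a single conjugacy class. -/
theorem injective_or_injective_of_ker_coprodMap {Y Z : Type*} {α : FreeGroup Y →* A}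
    {β : FreeGroup Z →* B} {s : Coprod (FreeGroup Y) (FreeGroup Z)}
    (hs : (Coprod.map α β).ker = Subgroup.normalClosure {s}) :
    Function.Injective α ∨ Function.Injective β := by
  rw [← MonoidHom.ker_eq_bot_iff, ← MonoidHom.ker_eq_bot_iff]
  by_contra! h
  obtain ⟨c, hc, hc1⟩ := exists_conjInvariant_ne_one h.1
  obtain ⟨d, hd, hd1⟩ := exists_conjInvariant_ne_one h.2
  let N : Subgroup (Coprod (FreeGroup Y) (FreeGroup Z)) :=
    α.ker.comap Coprod.fst ⊓ β.ker.comap Coprod.snd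
  have hN : ∀ z ∈ Subgroup.normalClosure {s}, z ∈ N := fun z hz =>
    ⟨fst_mem_ker_of_mem_ker_coprodMap (hs ▸ hz), snd_mem_ker_of_mem_ker_coprodMap (hs ▸ hz)⟩
  have hcd := (hc.comp_subgroupComap Coprod.fst).prod_inf (hd.comp_subgroupComap
    (Coprod.snd : Coprod (FreeGroup Y) (FreeGroup Z) →* FreeGroup Z))
  obtain ⟨x, hx⟩ := DFunLike.ne_iff.1 hc1
  obtain ⟨y, hy⟩ := DFunLike.ne_iff.1 hd1
  have hxs : Coprod.inl (x : FreeGroup Y) ∈ Subgroup.normalClosure {s} := by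
    rw [← hs, MonoidHom.mem_ker, Coprod.map_apply_inl, MonoidHom.mem_ker.1 x.2, map_one]
  have hys : Coprod.inr (y : FreeGroup Z) ∈ Subgroup.normalClosure {s} := by
    rw [← hs, MonoidHom.mem_ker, Coprod.map_apply_inr, MonoidHom.mem_ker.1 y.2, map_one]
  let s' : N := ⟨s, hN s (self_mem_normalClosure _)⟩
  let x' : N := ⟨_, hN _ hxs⟩
  let y' : N := ⟨_, hN _ hys⟩
  let c' : N →* Multiplicative ℚ := (c.comp (Coprod.fst.subgroupComap _)).comp
    (Subgroup.inclusion inf_le_left)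
  let d' : N →* Multiplicative ℚ := (d.comp (Coprod.snd.subgroupComap _)).comp
    (Subgroup.inclusion inf_le_right)
  obtain ⟨k, hk⟩ := hcd.mem_zpowers (s := s') (x := x') hxs
  obtain ⟨l, hl⟩ := hcd.mem_zpowers (s := s') (x := y') hys
  have hcx : c' x' = c x := congrArg c (Subtype.ext (Coprod.fst_apply_inl _))
  have hdx : d' x' = 1 := (congrArg d (Subtype.ext (Coprod.snd_apply_inl _))).trans (map_one d)
  have hcy : c' y' = 1 := (congrArg c (Subtype.ext (Coprod.fst_apply_inr _))).trans (map_one c)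
  have hdy : d' y' = d y := congrArg d (Subtype.ext (Coprod.snd_apply_inr _))
  exact (eq_one_or_eq_one_of_mem_zpowers ⟨k, hk.trans (Prod.ext hcx hdx)⟩
    ⟨l, hl.trans (Prod.ext hcy hdy)⟩).elim hx hy

end FactorInjective

section Supported

variable {X Z : Type*}

/-- The subgroup of a free group consisting of the words in the letters of `A`. -/
def supported (A : Set X) : Subgroup (FreeGroup X) := Subgroup.closure (FreeGroup.of '' A)

theorem of_mem_supported {A : Set X} {x : X} (hx : x ∈ A) : FreeGroup.of x ∈ supported A :=
  Subgroup.subset_closure ⟨x, hx, rfl⟩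

theorem supported_mono {A B : Set X} (h : A ⊆ B) : supported A ≤ supported B :=
  Subgroup.closure_mono (Set.image_mono h)

theorem map_supported (f : X → Z) (A : Set X) :
    (supported A).map (FreeGroup.map f) = supported (f '' A) := by
  rw [supported, supported, MonoidHom.map_closure, Set.image_image, Set.image_image]
  simp only [FreeGroup.map.of]

theorem range_map_eq_supported (f : X → Z) :
    (FreeGroup.map f).range = supported (Set.range f) := by
  rw [FreeGroup.map_eq_lift, FreeGroup.range_lift_eq_closure, supported, Set.range_comp]

theorem eqOn_supported {G : Type*} [Group G] {f g : FreeGroup X →* G} {A : Set X}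
    (h : ∀ x ∈ A, f (FreeGroup.of x) = g (FreeGroup.of x)) : Set.EqOn f g (supported A) :=
  MonoidHom.eqOn_closure (Set.forall_mem_image.2 h)

theorem exists_mk_cons_eq (p : X × Bool) (L : List (X × Bool)) :
    ∃ e : ℤˣ, FreeGroup.mk (p :: L) = FreeGroup.of p.1 ^ (e : ℤ) * FreeGroup.mk L := by
  obtain ⟨x, _ | _⟩ := p
  · exact ⟨-1, by rw [Units.val_neg, Units.val_one, zpow_neg_one]; rfl⟩
  · exact ⟨1, by rw [Units.val_one, zpow_one]; rfl⟩

theorem mk_mem_supported {A : Set X} {L : List (X × Bool)} (h : ∀ p ∈ L, p.1 ∈ A) :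
    FreeGroup.mk L ∈ supported A := by
  induction L with
  | nil => exact one_mem _
  | cons p L ih =>
    rw [List.forall_mem_cons] at h
    obtain ⟨e, he⟩ := exists_mk_cons_eq p L
    exact he ▸ mul_mem (zpow_mem (of_mem_supported h.1) _) (ih h.2)

theorem exists_finite_mem_supported (R : FreeGroup X) :
    ∃ A : Set X, A.Finite ∧ R ∈ supported A := by
  classical
  refine ⟨{x | x ∈ R.toWord.map Prod.fst}, List.finite_toSet _, ?_⟩
  have h : FreeGroup.mk R.toWord ∈ supported {x | x ∈ R.toWord.map Prod.fst} :=
    mk_mem_supported fun _ hp => List.mem_map_of_mem hp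
  rwa [FreeGroup.mk_toWord] at h

theorem norm_map_le [DecidableEq X] [DecidableEq Z] (f : X → Z) (w : FreeGroup X) :
    (FreeGroup.map f w).norm ≤ w.norm := by
  conv_lhs => rw [← w.mk_toWord, FreeGroup.map.mk]
  exact FreeGroup.norm_mk_le.trans_eq (List.length_map _)

/-- The endomorphism of a free group that kills the letters outside `A`; it is a retraction onto
`supported A`. -/
noncomputable def restrict (A : Set X) : FreeGroup X →* FreeGroup X :=
  FreeGroup.lift (A.mulIndicator FreeGroup.of)

theorem restrict_of_mem {A : Set X} {x : X} (hx : x ∈ A) :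
    restrict A (FreeGroup.of x) = FreeGroup.of x := by
  rw [restrict, FreeGroup.lift_apply_of, Set.mulIndicator_of_mem hx]

theorem restrict_of_notMem {A : Set X} {x : X} (hx : x ∉ A) : restrict A (FreeGroup.of x) = 1 := by
  rw [restrict, FreeGroup.lift_apply_of, Set.mulIndicator_of_notMem hx]

theorem restrict_eq_self {A : Set X} {w : FreeGroup X} (hw : w ∈ supported A) :
    restrict A w = w :=
  eqOn_supported (g := MonoidHom.id _) (fun _ => restrict_of_mem) hw

theorem restrict_mem_supported_inter (A : Set X) {B : Set X} {w : FreeGroup X}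
    (hw : w ∈ supported B) : restrict A w ∈ supported (A ∩ B) := by
  suffices supported B ≤ (supported (A ∩ B)).comap (restrict A) from this hw
  refine (Subgroup.closure_le _).2 (Set.forall_mem_image.2 fun x hx => ?_)
  rw [SetLike.mem_coe, Subgroup.mem_comap]
  by_cases hxA : x ∈ A
  · rw [restrict_of_mem hxA]
    exact of_mem_supported ⟨hxA, hx⟩
  · rw [restrict_of_notMem hxA]
    exact one_mem _

end Supported

section ConjugateInto

/-- The element `r` is conjugate into the subgroup `H` if some conjugate of it lies in `H`. -/
def ConjugateInto {G : Type*} [Group G] (H : Subgroup G) (r : G) : Prop := ∃ u ∈ H, IsConj u r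

theorem normalClosure_le_of_isConj {G : Type*} [Group G] {r s : G} (h : IsConj r s) :
    Subgroup.normalClosure {r} ≤ Subgroup.normalClosure {s} := by
  obtain ⟨g, rfl⟩ := isConj_iff.1 h.symm
  exact normalClosure_singleton_le
    (Subgroup.normalClosure_normal.conj_mem _ (self_mem_normalClosure s) g)

theorem normalClosure_eq_of_isConj {G : Type*} [Group G] {r s : G} (h : IsConj r s) :
    Subgroup.normalClosure {r} = Subgroup.normalClosure {s} :=
  le_antisymm (normalClosure_le_of_isConj h) (normalClosure_le_of_isConj h.symm)

variable {X : Type*} {R : FreeGroup X}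

theorem ConjugateInto.inter {A B : Set X} (hA : ConjugateInto (supported A) R)
    (hB : ConjugateInto (supported B) R) : ConjugateInto (supported (A ∩ B)) R := by
  obtain ⟨a, ha, haR⟩ := hA
  obtain ⟨b, hb, hbR⟩ := hB
  refine ⟨restrict A b, restrict_mem_supported_inter A hb, IsConj.trans ?_ haR⟩
  have h := (restrict A).map_isConj (hbR.trans haR.symm)
  rwa [restrict_eq_self ha] at h

theorem exists_not_conjugateInto_compl {A : Set X} (hR : ¬ ConjugateInto (supported A) R) :
    ∃ x ∉ A, ¬ ConjugateInto (supported {x}ᶜ) R := by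
  by_contra! h
  have avoid (S : Set X) (hS : S.Finite) (hSA : Disjoint S A) :
      ConjugateInto (supported Sᶜ) R := by
    induction S, hS using Set.Finite.induction_on with
    | empty => exact ⟨R, by simp [supported], IsConj.refl R⟩
    | @insert x S _ _ ih =>
      rw [Set.disjoint_insert_left] at hSA
      rw [Set.insert_eq, Set.compl_union]
      exact (h x hSA.1).inter (ih hSA.2)
  obtain ⟨S, hS, hRS⟩ := exists_finite_mem_supported R
  obtain ⟨u, hu, huR⟩ := ConjugateInto.inter ⟨R, hRS, IsConj.refl R⟩
    (avoid (S \ A) hS.sdiff Set.disjoint_sdiff_left)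
  refine hR ⟨u, supported_mono ?_ hu, huR⟩
  rw [← Set.sdiff_eq, Set.sdiff_sdiff_right_self]
  exact Set.inter_subset_right

end ConjugateInto

section ExponentSum

variable {X : Type*} [DecidableEq X]

/-- The exponent sum of the letter `x`, as a homomorphism to the infinite cyclic group. -/
def exponentSum (x : X) : FreeGroup X →* Multiplicative ℤ :=
  FreeGroup.lift (Pi.mulSingle x (Multiplicative.ofAdd 1))

theorem exponentSum_of_self (x : X) :
    exponentSum x (FreeGroup.of x) = Multiplicative.ofAdd 1 := by simp [exponentSum]

theorem exponentSum_of_ne {x y : X} (h : y ≠ x) : exponentSum x (FreeGroup.of y) = 1 := by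
  simp [exponentSum, h]

theorem lift_update_mul {G : Type*} [Group G] {g : X → G} {x : X} {t z : G}
    (ht : Commute t z) (hg : ∀ y, Commute (g y) z) (w : FreeGroup X) :
    FreeGroup.lift (Function.update g x (t * z)) w
      = FreeGroup.lift (Function.update g x t) w * z ^ (exponentSum x w).toAdd := by
  let f := FreeGroup.lift (Function.update g x t)
  have hf (v : FreeGroup X) : f v ∈ Subgroup.centralizer {z} := by
    refine FreeGroup.range_lift_le ?_ ⟨v, rfl⟩
    rintro _ ⟨y, rfl⟩
    rw [SetLike.mem_coe, Subgroup.mem_centralizer_singleton_iff]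
    rcases eq_or_ne y x with rfl | hy
    · rw [Function.update_self]
      exact ht
    · rw [Function.update_of_ne hy]
      exact hg y
  let F := (f.noncommCoprod (zpowersHom G z) fun v e =>
    (show Commute (f v) z from Subgroup.mem_centralizer_singleton_iff.1 (hf v)).zpow_right _)
      |>.comp ((MonoidHom.id _).prod (exponentSum x))
  have hF (v : FreeGroup X) : F v = f v * z ^ (exponentSum x v).toAdd := rfl
  suffices FreeGroup.lift (Function.update g x (t * z)) = F from DFunLike.congr_fun this w
  refine FreeGroup.ext_hom _ _ fun y => ?_
  rw [hF]
  rcases eq_or_ne y x with rfl | hy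
  · simp [f, exponentSum_of_self]
  · simp [f, exponentSum_of_ne hy, hy]

/- Newton iteration: correcting `t` by an element `z` of depth `c` changes the value of `R` by the
power `z ^ exponentSum x R` modulo depth `c + 1`, because `z` is central at that precision. -/
theorem exists_lift_update_mem_filtration {B : Type*} [Ring B] [Algebra ℚ B] {g : X → (B⟦X⟧)ˣ}
    (hg : ∀ y, g y ∈ filtration B 0) {x : X} {R : FreeGroup X} (hR : exponentSum x R ≠ 1)
    (c : ℕ) : ∃ t, FreeGroup.lift (Function.update g x t) R ∈ filtration B c := by
  suffices ∃ t ∈ filtration B 0, FreeGroup.lift (Function.update g x t) R ∈ filtration B c from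
    this.imp fun _ h => h.2
  have hupdate {t} (ht : t ∈ filtration B 0) (y : X) : Function.update g x t y ∈ filtration B 0 :=
    Function.forall_update_iff g (p := fun _ u => u ∈ filtration B 0) |>.2 ⟨ht, fun y _ => hg y⟩ y
  induction c with
  | zero => exact ⟨1, one_mem _, FreeGroup.range_lift_le
      (Set.range_subset_iff.2 (hupdate (one_mem _))) ⟨R, rfl⟩⟩
  | succ c ih =>
    obtain ⟨t, ht, htR⟩ := ih
    set v := FreeGroup.lift (Function.update g x t) R
    set e : ℤ := (exponentSum x R).toAdd
    have he : (e : ℚ) ≠ 0 := Int.cast_ne_zero.2 hR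
    obtain ⟨z, hz⟩ := leadingCoeff_surjective (B := B) c
      (Multiplicative.ofAdd (-(e : ℚ)⁻¹ • (leadingCoeff c ⟨v, htR⟩).toAdd))
    have hcorrected : v * (z : (B⟦X⟧)ˣ) ^ e ∈ filtration B (c + 1) := by
      refine leadingCoeff_eq_one_iff (u := ⟨v, htR⟩ * z ^ e).1 ?_
      rw [map_mul, map_zpow, hz]
      refine Multiplicative.toAdd.injective ?_
      rw [toAdd_mul, toAdd_zpow, toAdd_ofAdd, toAdd_one, ← Int.cast_smul_eq_zsmul ℚ, smul_smul,
        mul_neg, mul_inv_cancel₀ he, neg_one_smul, add_neg_cancel]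
    refine ⟨t * z, mul_mem ht (filtration_antitone (Nat.zero_le c) z.2), ?_⟩
    let q := QuotientGroup.mk' (filtration B (c + 1))
    have hq (t' : (B⟦X⟧)ˣ) : q (FreeGroup.lift (Function.update g x t') R)
        = FreeGroup.lift (Function.update (q ∘ g) x (q t')) R := by
      rw [← Function.comp_update]
      exact DFunLike.congr_fun (FreeGroup.ext_hom (q.comp (FreeGroup.lift _)) (FreeGroup.lift _)
        fun y => by simp) R
    rw [← QuotientGroup.eq_one_iff] at hcorrected ⊢
    refine Eq.trans ?_ hcorrected
    calc q (FreeGroup.lift (Function.update g x (t * z)) R)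
        = FreeGroup.lift (Function.update (q ∘ g) x (q t * q z)) R := by rw [hq, map_mul]
      _ = q v * q z ^ e := by
        rw [lift_update_mul (g := q ∘ g) (commute_mk_filtration ht z.2)
          fun y => commute_mk_filtration (hg y) z.2, hq]
      _ = q (v * (z : (B⟦X⟧)ˣ) ^ e) := by rw [map_mul, map_zpow]

theorem disjoint_supported_compl_of_exponentSum_ne_one {x : X} {R : FreeGroup X}
    (hR : exponentSum x R ≠ 1) :
    Disjoint (supported {x}ᶜ) (Subgroup.normalClosure {R}) := by
  refine Subgroup.disjoint_def.2 fun {w} hw hwR => ?_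
  by_contra hne
  obtain ⟨c, hc⟩ := exists_magnus_notMem_filtration hne
  obtain ⟨t, ht⟩ := exists_lift_update_mem_filtration
    (g := fun y => magnus X (FreeGroup.of y)) (fun y => magnus_mem_filtration _) hR c
  have hwc := normalClosure_singleton_le (N := (filtration _ c).comap (FreeGroup.lift _)) ht hwR
  have hwm : FreeGroup.lift (Function.update _ x t) w = magnus X w :=
    eqOn_supported (fun y hy => by rw [FreeGroup.lift_apply_of, Function.update_of_ne hy]) hw
  exact hc (hwm ▸ hwc)

end ExponentSum

section Unfold

variable {X : Type*} {x : X}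

/-- The homomorphism sending the letter `(y, k)` to `x ^ k * y * x ^ (-k)`. On the letters `(y, k)`
with `y ≠ x` it identifies a free group with the kernel of the exponent sum of `x`. -/
def unfold (x : X) : FreeGroup (X × ℤ) →* FreeGroup X :=
  FreeGroup.lift fun p => MulAut.conj (FreeGroup.of x ^ p.2) (FreeGroup.of p.1)

/-- Translation of the levels of the letters in `X × ℤ` by `k`. -/
def shift (X : Type*) (k : ℤ) : FreeGroup (X × ℤ) →* FreeGroup (X × ℤ) :=
  FreeGroup.map (Prod.map id (· + k))

theorem unfold_of (p : X × ℤ) :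
    unfold x (FreeGroup.of p) = MulAut.conj (FreeGroup.of x ^ p.2) (FreeGroup.of p.1) :=
  FreeGroup.lift_apply_of

theorem shift_of (k : ℤ) (p : X × ℤ) :
    shift X k (FreeGroup.of p) = FreeGroup.of (p.1, p.2 + k) :=
  FreeGroup.map.of

theorem shift_injective (k : ℤ) : Function.Injective (shift X k) :=
  FreeGroup.map_injective (Function.injective_id.prodMap (add_left_injective k))

theorem unfold_shift (k : ℤ) (r : FreeGroup (X × ℤ)) :
    unfold x (shift X k r) = MulAut.conj (FreeGroup.of x ^ k) (unfold x r) := by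
  refine DFunLike.congr_fun (f := (unfold x).comp (shift X k))
    (g := (MulAut.conj (FreeGroup.of x ^ k)).toMonoidHom.comp (unfold x))
    (FreeGroup.ext_hom _ _ fun p => ?_) r
  simp [unfold_of, shift_of, add_comm, zpow_add]

theorem map_shift_supported (B : Set X) (I : Set ℤ) (k : ℤ) :
    (supported (B ×ˢ I)).map (shift X k) = supported (B ×ˢ ((· + k) '' I)) := by
  rw [shift, map_supported, Set.prodMap_image_prod, Set.image_id]

theorem exists_unfold_mul_zpow_eq [DecidableEq X] (x : X) (L : List (X × Bool)) :
    ∃ r ∈ supported ({x}ᶜ ×ˢ Set.univ),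
      unfold x r * FreeGroup.of x ^ (exponentSum x (FreeGroup.mk L)).toAdd = FreeGroup.mk L ∧
      r.norm ≤ L.countP (·.1 ≠ x) := by
  induction L with
  | nil => exact ⟨1, one_mem _, by simp [← FreeGroup.one_eq_mk], by simp⟩
  | cons p L ih =>
    obtain ⟨r, hr, hrL, hnorm⟩ := ih
    obtain ⟨e, he⟩ := exists_mk_cons_eq p L
    rw [he, map_mul, toAdd_mul, map_zpow]
    obtain ⟨y, b⟩ := p
    rcases eq_or_ne y x with rfl | hy
    · refine ⟨shift X e r, ?_, ?_, ?_⟩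
      · have h := Subgroup.mem_map_of_mem (shift X e) hr
        rw [map_shift_supported] at h
        exact supported_mono (Set.prod_mono_right (Set.subset_univ _)) h
      · conv_rhs => rw [← hrL]
        rw [unfold_shift, exponentSum_of_self, toAdd_zpow, toAdd_ofAdd, smul_eq_mul, mul_one,
          MulAut.conj_apply, zpow_add]
        group
      · rw [List.countP_cons_of_neg (by simp)]
        exact (norm_map_le _ r).trans hnorm
    · refine ⟨FreeGroup.of (y, 0) ^ (e : ℤ) * r,
        mul_mem (zpow_mem (of_mem_supported (Set.mk_mem_prod hy (Set.mem_univ _))) _) hr, ?_, ?_⟩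
      · rw [exponentSum_of_ne hy, one_zpow, toAdd_one, zero_add, map_mul, map_zpow, unfold_of,
          zpow_zero, map_one, MulAut.one_apply, mul_assoc, hrL]
      · have h1 : (FreeGroup.of (y, (0 : ℤ)) ^ (e : ℤ)).norm = 1 := by
          rcases Int.units_eq_one_or e with rfl | rfl <;> simp
        rw [List.countP_cons_of_pos (by simpa using hy), add_comm, ← h1]
        exact (FreeGroup.norm_mul_le _ _).trans (by gcongr)

theorem exists_unfold_eq [DecidableEq X] {R : FreeGroup X} (hR : exponentSum x R = 1)
    (hxR : R ∉ supported {x}ᶜ) :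
    ∃ r ∈ supported ({x}ᶜ ×ˢ Set.univ), unfold x r = R ∧ r.norm < R.norm := by
  obtain ⟨r, hr, hrR, hnorm⟩ := exists_unfold_mul_zpow_eq x R.toWord
  rw [FreeGroup.mk_toWord, hR, toAdd_one, zpow_zero, mul_one] at hrR
  refine ⟨r, hr, hrR, hnorm.trans_lt (lt_of_le_of_ne List.countP_le_length fun h => hxR ?_)⟩
  rw [← R.mk_toWord]
  exact mk_mem_supported fun p hp => by simpa using List.countP_eq_length.1 h p hp

theorem exists_mem_supported_Icc {B : Set X} {r : FreeGroup (X × ℤ)}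
    (hr : r ∈ supported (B ×ˢ Set.univ)) :
    ∃ (k : ℕ) (a : ℤ), ConjugateInto (supported (B ×ˢ Set.Icc a (a + k))) r := by
  obtain ⟨A, hA, hrA⟩ := exists_finite_mem_supported r
  obtain ⟨N, hN⟩ := (hA.image fun p => p.2.natAbs).bddAbove
  refine ⟨2 * N, -N, restrict A r, supported_mono ?_ (restrict_mem_supported_inter A hr), ?_⟩
  · rintro p ⟨hpA, hpB, -⟩
    have : p.2.natAbs ≤ N := hN ⟨p, hpA, rfl⟩
    exact ⟨hpB, by push_cast; constructor <;> omega⟩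
  · rw [restrict_eq_self hrA]

end Unfold

section Freiheitssatz

theorem injective_mk'_comp {F : Type u} {G : Type v} [Group F] [Group G] {f : F →* G}
    {N : Subgroup G} [N.Normal] (hf : Function.Injective f) (h : Disjoint f.range N) :
    Function.Injective ((QuotientGroup.mk' N).comp f) :=
  (injective_iff_map_eq_one _).2 fun v hv => hf <|
    (Subgroup.disjoint_def.1 h ⟨v, rfl⟩ ((QuotientGroup.eq_one_iff _).1 hv)).trans (map_one f).symm

theorem exists_conj_eq {F : Type u} {G : Type v} [Group F] [Group G] {c s : F →* G}
    (hc : Function.Injective c) (hs : Function.Injective s) :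
    ∃ (K : Type v) (_ : Group K) (o : G →* K) (t : K), Function.Injective o ∧
      ∀ v, MulAut.conj t (o (c v)) = o (s v) := by
  let φ : c.range ≃* s.range := (c.ofInjective hc).symm.trans (s.ofInjective hs)
  refine ⟨HNNExtension G c.range s.range φ, inferInstance, HNNExtension.of, HNNExtension.t,
    HNNExtension.of_injective φ, fun v => ?_⟩
  have h : φ (c.ofInjective hc v) = s.ofInjective hs v := by simp [φ]
  rw [MulAut.conj_apply, mul_inv_eq_iff_eq_mul]
  exact (HNNExtension.t_mul_of _).trans (by rw [h])

variable {X : Type u} {x : X}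

/- The target is the HNN extension of `FreeGroup (X × ℤ) ⧸ N` whose stable letter `t` shifts the
lower window to the upper one; `x` goes to `t`. -/
theorem exists_hom_unfold_eq {N : Subgroup (FreeGroup (X × ℤ))} [N.Normal] {a b : ℤ}
    (hlower : Disjoint (supported ({x}ᶜ ×ˢ Set.Ico a b)) N)
    (hupper : Disjoint (supported ({x}ᶜ ×ˢ Set.Ioc a b)) N) :
    ∃ (K : Type u) (_ : Group K) (Ψ : FreeGroup X →* K) (o : FreeGroup (X × ℤ) ⧸ N →* K),
      Function.Injective o ∧
        ∀ w ∈ supported ({x}ᶜ ×ˢ Set.Icc a b), Ψ (unfold x w) = o (QuotientGroup.mk w) := by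
  classical
  let q := QuotientGroup.mk' N
  let lower := supported ({x}ᶜ ×ˢ Set.Ico a b)
  have hc : Function.Injective (q.comp lower.subtype) :=
    injective_mk'_comp lower.subtype_injective (by rwa [Subgroup.range_subtype])
  have hs : Function.Injective (q.comp ((shift X 1).comp lower.subtype)) := by
    refine injective_mk'_comp ((shift_injective 1).comp lower.subtype_injective) ?_
    rwa [MonoidHom.range_comp, Subgroup.range_subtype, map_shift_supported, Set.image_add_const_Ico,
      Set.Ico_add_one_add_one_eq_Ioc]
  obtain ⟨K, hK, o, t, ho, ht⟩ := exists_conj_eq hc hs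
  have hlevel {y : X} (hy : y ≠ x) (i : ℕ) (hi : a + i ≤ b) :
      MulAut.conj (t ^ (i : ℤ)) (o (q (FreeGroup.of (y, a)))) =
        o (q (FreeGroup.of (y, a + i))) := by
    induction i with
    | zero => simp
    | succ i ih =>
      have hmem : FreeGroup.of (y, a + i) ∈ lower := of_mem_supported ⟨hy, by simp; omega⟩
      have := ht ⟨_, hmem⟩
      simp only [MonoidHom.comp_apply, Subgroup.subtype_apply, shift_of] at this
      rw [Nat.cast_succ, ← add_assoc, ← this, ← ih (by omega), add_comm, zpow_one_add, map_mul,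
        MulAut.mul_apply]
  let Ψ : FreeGroup X →* K := FreeGroup.lift fun y =>
    if y = x then t else MulAut.conj (t ^ (-a)) (o (q (FreeGroup.of (y, a))))
  refine ⟨K, hK, Ψ, o, ho, eqOn_supported (f := Ψ.comp (unfold x)) (g := o.comp q) ?_⟩
  rintro ⟨y, k⟩ ⟨hy, hak, hkb⟩
  obtain ⟨i, rfl⟩ := Int.le.dest hak
  have hΨx : Ψ (FreeGroup.of x) = t := by simp [Ψ]
  have hΨy : Ψ (FreeGroup.of y) = MulAut.conj (t ^ (-a)) (o (q (FreeGroup.of (y, a)))) := by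
    simp [Ψ, show y ≠ x from hy]
  rw [MonoidHom.comp_apply, MonoidHom.comp_apply, ← hlevel hy i hkb, unfold_of, MulAut.conj_apply,
    map_mul, map_mul, map_inv, map_zpow, hΨx, hΨy, ← MulAut.conj_apply, ← MulAut.mul_apply,
    ← map_mul, ← zpow_add, add_neg_cancel_comm]

theorem conjugateInto_compl_of_unfold {r : FreeGroup (X × ℤ)} {a : ℤ}
    (h : ConjugateInto (supported ({x}ᶜ ×ˢ {a})) r) :
    ConjugateInto (supported {x}ᶜ) (unfold x r) := by
  obtain ⟨u, hu, hur⟩ := h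
  refine ⟨FreeGroup.map Prod.fst u, ?_, IsConj.trans ?_ ((unfold x).map_isConj hur)⟩
  · have h := Subgroup.mem_map_of_mem (FreeGroup.map Prod.fst) hu
    rw [map_supported] at h
    exact supported_mono (Set.fst_image_prod_subset _ _) h
  · refine isConj_iff.2 ⟨FreeGroup.of x ^ a, ?_⟩
    refine (eqOn_supported (f := unfold x) (g := (MulAut.conj (FreeGroup.of x ^ a)).toMonoidHom.comp
      (FreeGroup.map Prod.fst)) ?_ hu).symm
    rintro ⟨y, _⟩ ⟨-, rfl⟩
    simp [unfold_of]

theorem disjoint_supported_compl_of_window {R : FreeGroup X} {r : FreeGroup (X × ℤ)} {a b : ℤ}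
    (hab : a < b) (hrR : unfold x r = R)
    (hr : ConjugateInto (supported ({x}ᶜ ×ˢ Set.Icc a b)) r)
    (hlower : Disjoint (supported ({x}ᶜ ×ˢ Set.Ico a b)) (Subgroup.normalClosure {r}))
    (hupper : Disjoint (supported ({x}ᶜ ×ˢ Set.Ioc a b)) (Subgroup.normalClosure {r})) :
    Disjoint (supported {x}ᶜ) (Subgroup.normalClosure {R}) := by
  obtain ⟨K, _, Ψ, o, ho, hΨ⟩ := exists_hom_unfold_eq hlower hupper
  obtain ⟨r', hr', hconj⟩ := hr
  have hΨR : Ψ R = 1 := by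
    have hr'1 : (r' : FreeGroup (X × ℤ) ⧸ Subgroup.normalClosure {r}) = 1 :=
      (QuotientGroup.eq_one_iff _).2
        (normalClosure_le_of_isConj hconj (self_mem_normalClosure r'))
    have h := Ψ.map_isConj ((unfold x).map_isConj hconj)
    rwa [hΨ _ hr', hr'1, map_one, hrR, isConj_one_right] at h
  refine Subgroup.disjoint_def.2 fun {w} hw hwR => ?_
  let lift : FreeGroup X →* FreeGroup (X × ℤ) := FreeGroup.map fun y => (y, a)
  have hlift : unfold x (lift w) = MulAut.conj (FreeGroup.of x ^ a) w :=
    DFunLike.congr_fun (f := (unfold x).comp lift)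
      (g := (MulAut.conj (FreeGroup.of x ^ a)).toMonoidHom)
      (FreeGroup.ext_hom _ _ fun y => by simp [lift, unfold_of]) w
  have hmem : lift w ∈ supported ({x}ᶜ ×ˢ {a}) := by
    have h := Subgroup.mem_map_of_mem lift hw
    rw [map_supported] at h
    refine supported_mono ?_ h
    rintro _ ⟨y, hy, rfl⟩
    exact ⟨hy, rfl⟩
  have hker : o (QuotientGroup.mk (lift w)) = 1 := by
    rw [← hΨ _ (supported_mono (Set.prod_mono_right (by simpa using hab.le)) hmem), hlift,
      MulAut.conj_apply, map_mul_inv, map_mul,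
      MonoidHom.mem_ker.1 (normalClosure_singleton_le (MonoidHom.mem_ker.2 hΨR) hwR), mul_one,
      mul_inv_cancel]
  have h1 : lift w = 1 := Subgroup.disjoint_def.1 hlower
    (supported_mono (Set.prod_mono_right (by simpa using hab)) hmem)
    ((QuotientGroup.eq_one_iff _).1 (ho (hker.trans (map_one o).symm)))
  exact FreeGroup.map_injective (fun _ _ h => congrArg Prod.fst h) (h1.trans (map_one _).symm)

theorem disjoint_supported_compl_of_exponentSum_eq_one [DecidableEq X] {R : FreeGroup X}
    (hσ : exponentSum x R = 1)
    (hR : ¬ ConjugateInto (supported {x}ᶜ) R)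
    (ih : ∀ (A : Set (X × ℤ)) (r : FreeGroup (X × ℤ)), r.norm < R.norm →
      ¬ ConjugateInto (supported A) r → Disjoint (supported A) (Subgroup.normalClosure {r})) :
    Disjoint (supported {x}ᶜ) (Subgroup.normalClosure {R}) := by
  classical
  obtain ⟨r, hr, hrR, hnorm⟩ := exists_unfold_eq hσ fun h => hR ⟨R, h, IsConj.refl R⟩
  have hex := exists_mem_supported_Icc hr
  obtain ⟨a, ha⟩ := Nat.find_spec hex
  rcases hk : Nat.find hex with _ | k
  · rw [hk, Nat.cast_zero, add_zero, Set.Icc_self] at ha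
    exact absurd (hrR ▸ conjugateInto_compl_of_unfold ha) hR
  have hmin (a' : ℤ) : ¬ ConjugateInto (supported ({x}ᶜ ×ˢ Set.Icc a' (a' + k))) r :=
    fun h => Nat.find_min hex (hk ▸ Nat.lt_succ_self k) ⟨a', h⟩
  rw [hk, Nat.cast_succ, ← add_assoc] at ha
  refine disjoint_supported_compl_of_window (by omega) hrR ha (ih _ _ hnorm ?_) (ih _ _ hnorm ?_)
  · rw [Set.Ico_add_one_right_eq_Icc]
    exact hmin a
  · rw [← Set.Icc_add_one_left_eq_Ioc, add_right_comm]
    exact hmin (a + 1)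

theorem freiheitssatz {A : Set X} {R : FreeGroup X} (hR : ¬ ConjugateInto (supported A) R) :
    Disjoint (supported A) (Subgroup.normalClosure {R}) := by
  classical
  induction hn : R.norm using Nat.strong_induction_on generalizing X with
  | _ n ih =>
    subst hn
    obtain ⟨x, hxA, hx⟩ := exists_not_conjugateInto_compl hR
    refine Disjoint.mono_left (supported_mono (Set.subset_compl_singleton_iff.2 hxA)) ?_
    by_cases hσ : exponentSum x R = 1
    · exact disjoint_supported_compl_of_exponentSum_eq_one hσ hx
        fun A r hr h => ih _ (by convert hr) h rfl
    · exact disjoint_supported_compl_of_exponentSum_ne_one hσ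

end Freiheitssatz

section Syllables

variable {P Q A B : Type*} [Group P] [Group Q] [Group A] [Group B]

/-- The inclusion of the letters of the two factors into the free product; normal forms in
`P ∗ Q` are products of such syllables. -/
def syllable : P ⊕ Q → Coprod P Q :=
  Sum.elim Coprod.inl Coprod.inr

theorem map_syllable (α : P →* A) (β : Q →* B) (s : P ⊕ Q) :
    Coprod.map α β (syllable s) = syllable (s.map α β) := by
  cases s <;> rfl

theorem map_prod_syllable (α : P →* A) (β : Q →* B) (l : List (P ⊕ Q)) :
    Coprod.map α β (l.map syllable).prod = ((l.map (Sum.map α β)).map syllable).prod := by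
  simp only [map_list_prod, List.map_map, Function.comp_def, map_syllable]

theorem syllable_map_inv (s : P ⊕ Q) : syllable (s.map (·⁻¹) (·⁻¹)) = (syllable s)⁻¹ := by
  cases s <;> exact map_inv _ _

theorem exists_syllable_eq_mul {s t : P ⊕ Q} (h : s.isLeft = t.isLeft) :
    ∃ r, syllable r = syllable s * syllable t := by
  rcases s with p | q <;> rcases t with p' | q' <;> cases h
  · exact ⟨.inl (p * p'), map_mul _ _ _⟩
  · exact ⟨.inr (q * q'), map_mul _ _ _⟩

theorem exists_prod_syllable_eq (c : Coprod P Q) :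
    ∃ l : List (P ⊕ Q), (l.map syllable).prod = c := by
  induction c using Coprod.induction_on with
  | inl p => exact ⟨[.inl p], List.prod_singleton⟩
  | inr q => exact ⟨[.inr q], List.prod_singleton⟩
  | mul c d hc hd =>
    obtain ⟨l, rfl⟩ := hc
    obtain ⟨l', rfl⟩ := hd
    exact ⟨l ++ l', by rw [List.map_append, List.prod_append]⟩

theorem exists_prod_ofFn_syllable_eq (c : Coprod P Q) :
    ∃ k, ∀ m ≥ k, ∃ s : Fin m → P ⊕ Q, (List.ofFn (syllable ∘ s)).prod = c := by
  obtain ⟨l, hl⟩ := exists_prod_syllable_eq c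
  refine ⟨l.length, fun m hm => ?_⟩
  obtain ⟨l', rfl, hl'⟩ : ∃ l' : List (P ⊕ Q), l'.length = m ∧ (l'.map syllable).prod = c := by
    refine ⟨l ++ List.replicate (m - l.length) (Sum.inl 1), ?_, ?_⟩
    · rw [List.length_append, List.length_replicate, Nat.add_sub_cancel' hm]
    · have hone : syllable (Sum.inl 1 : P ⊕ Q) = 1 := map_one Coprod.inl
      simp [hl, hone]
  exact ⟨l'.get, by rw [← List.map_ofFn, List.ofFn_get, hl']⟩

end Syllables

section NormalForm

variable {P Q : Type u}

/-- The two factors of `P ∗ Q` as a family indexed by `Bool`, which makes the normal form theorem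
for `Monoid.CoprodI` available for `Monoid.Coprod`. -/
def factor (P Q : Type u) (b : Bool) : Type u :=
  cond b P Q

/-- A syllable as an element of the factor it comes from. -/
def letter : P ⊕ Q → Σ b, factor P Q b
  | .inl p => ⟨true, p⟩
  | .inr q => ⟨false, q⟩

theorem letter_fst (s : P ⊕ Q) : (letter s).1 = s.isLeft := by
  cases s <;> rfl

variable [Group P] [Group Q]

instance : ∀ b, Group (factor P Q b)
  | true => inferInstanceAs (Group P)
  | false => inferInstanceAs (Group Q)

/-- The comparison map from the binary to the indexed free product. -/
def toCoprodI : Coprod P Q →* CoprodI (factor P Q) :=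
  Coprod.lift (CoprodI.of (M := factor P Q) (i := true))
    (CoprodI.of (M := factor P Q) (i := false))

theorem toCoprodI_syllable (s : P ⊕ Q) :
    toCoprodI (syllable s) = CoprodI.of (letter s).2 := by
  cases s <;> rfl

theorem syllable_eq_one_of_letter {s : P ⊕ Q} (h : (letter s).2 = 1) : syllable s = 1 := by
  rcases s with p | q
  · have hp : p = 1 := h
    exact hp ▸ map_one Coprod.inl
  · have hq : q = 1 := h
    exact hq ▸ map_one Coprod.inr

theorem exists_syllable_eq_one_or_isLeft_eq {l : List (P ⊕ Q)} (hl : l ≠ [])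
    (h : (l.map syllable).prod = 1) :
    (∃ s ∈ l, syllable s = 1) ∨ ∃ a b l₁ l₂, l = l₁ ++ a :: b :: l₂ ∧ a.isLeft = b.isLeft := by
  by_contra! hred
  let w : CoprodI.Word (factor P Q) :=
    { toList := l.map letter
      ne_one := by
        simp only [List.forall_mem_map]
        exact fun s hs h1 => hred.1 s hs (syllable_eq_one_of_letter h1)
      chain_ne := by
        rw [List.isChain_map, List.isChain_iff_forall_rel_of_append_cons_cons]
        intro a b l₁ l₂ h'
        rw [letter_fst, letter_fst]
        exact hred.2 a b l₁ l₂ h' }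
  have hw : w.prod = 1 := by
    have h' := congrArg toCoprodI h
    rw [map_list_prod, map_one, List.map_map] at h'
    rw [CoprodI.Word.prod, List.map_map, ← h']
    exact congrArg List.prod (List.map_congr_left fun s _ => (toCoprodI_syllable s).symm)
  classical
  have hempty : w = CoprodI.Word.empty :=
    CoprodI.Word.equiv.symm.injective (hw.trans CoprodI.Word.prod_empty.symm)
  exact hl (List.map_eq_nil_iff.1 (congrArg CoprodI.Word.toList hempty))

end NormalForm

section Paths

variable {P Q : Type*} [Group P] [Group Q] {S : Set (Coprod P Q)} {H : Subgroup (Coprod P Q)}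

/-- The walk which starts at `c` and right multiplies by the syllables in the list one after the
other stays in `S`. -/
def SyllablePath (S : Set (Coprod P Q)) : Coprod P Q → List (P ⊕ Q) → Prop
  | c, [] => c ∈ S
  | c, s :: l => c ∈ S ∧ SyllablePath S (c * syllable s) l

theorem SyllablePath.start_mem {c : Coprod P Q} {l : List (P ⊕ Q)} (h : SyllablePath S c l) :
    c ∈ S := by
  cases l with
  | nil => exact h
  | cons s l => exact h.1

theorem SyllablePath.mul_left (hS : ∀ h ∈ H, ∀ c ∈ S, h * c ∈ S) {h : Coprod P Q} (hh : h ∈ H)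
    {c : Coprod P Q} {l : List (P ⊕ Q)} (hl : SyllablePath S c l) : SyllablePath S (h * c) l := by
  induction l generalizing c with
  | nil => exact hS h hh c hl
  | cons s l ih =>
    refine ⟨hS h hh c hl.1, ?_⟩
    rw [mul_assoc]
    exact ih hl.2

theorem syllablePath_append {c : Coprod P Q} {l₁ l₂ : List (P ⊕ Q)} :
    SyllablePath S c (l₁ ++ l₂) ↔
      SyllablePath S c l₁ ∧ SyllablePath S (c * (l₁.map syllable).prod) l₂ := by
  induction l₁ generalizing c with
  | nil =>
    simp only [List.nil_append, List.map_nil, List.prod_nil, mul_one]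
    exact ⟨fun h => ⟨h.start_mem, h⟩, And.right⟩
  | cons s l ih =>
    simp only [List.cons_append, SyllablePath, List.map_cons, List.prod_cons, ih, and_assoc,
      mul_assoc]

theorem SyllablePath.erase (hS : ∀ h ∈ H, ∀ c ∈ S, h * c ∈ S) {c : Coprod P Q} {s : P ⊕ Q}
    {l₁ l₂ : List (P ⊕ Q)} (hl : SyllablePath S c (l₁ ++ s :: l₂))
    (hs : (c * (l₁.map syllable).prod) * syllable s * (c * (l₁.map syllable).prod)⁻¹ ∈ H) :
    SyllablePath S c (l₁ ++ l₂) := by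
  rw [syllablePath_append] at hl ⊢
  refine ⟨hl.1, ?_⟩
  convert hl.2.2.mul_left hS (inv_mem hs) using 1
  group

theorem SyllablePath.merge {c : Coprod P Q} {a b r : P ⊕ Q} {l₁ l₂ : List (P ⊕ Q)}
    (hl : SyllablePath S c (l₁ ++ a :: b :: l₂)) (hr : syllable r = syllable a * syllable b) :
    SyllablePath S c (l₁ ++ r :: l₂) := by
  rw [syllablePath_append] at hl ⊢
  refine ⟨hl.1, hl.2.1, ?_⟩
  rw [hr, ← mul_assoc]
  exact hl.2.2.2

/- The image of the path in `A ∗ B` is a closed word, so it is not reduced: either a single syllable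
dies, and `htie` allows us to cut it out, or two adjacent syllables can be merged. -/
theorem SyllablePath.conj_prod_mem {A B : Type u} [Group A] [Group B] {α : P →* A} {β : Q →* B}
    (hS : ∀ h ∈ H, ∀ c ∈ S, h * c ∈ S)
    (htie : ∀ c ∈ S, ∀ s, c * syllable s ∈ S → Coprod.map α β (syllable s) = 1 →
      c * syllable s * c⁻¹ ∈ H)
    {c : Coprod P Q} {l : List (P ⊕ Q)} (hl : SyllablePath S c l)
    (h1 : Coprod.map α β (l.map syllable).prod = 1) : c * (l.map syllable).prod * c⁻¹ ∈ H := by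
  induction hn : l.length using Nat.strong_induction_on generalizing l with | _ n ih
  subst hn
  by_cases hnil : l = []
  · simp [hnil, one_mem]
  have hword := map_prod_syllable α β l ▸ h1
  rcases exists_syllable_eq_one_or_isLeft_eq (by simpa using hnil) hword with
    ⟨_, hs, hs1⟩ | ⟨_, _, _, _, hl', hab⟩
  · obtain ⟨s, hsl, rfl⟩ := List.mem_map.1 hs
    rw [← map_syllable] at hs1
    obtain ⟨l₁, l₂, rfl⟩ := List.append_of_mem hsl
    have hpath := (syllablePath_append.1 hl).2
    have hsH := htie _ hpath.1 s hpath.2.start_mem hs1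
    have hrest := ih (l₁ ++ l₂).length (by simp) (hl.erase hS hsH) (by simpa [hs1] using h1) rfl
    convert mul_mem hsH hrest using 1
    simp only [List.map_append, List.map_cons, List.prod_append, List.prod_cons]
    group
  · obtain ⟨l₁, _, rfl, rfl, hm₁⟩ := List.map_eq_append_iff.1 hl'
    obtain ⟨a, _, rfl, rfl, hm₂⟩ := List.map_eq_cons_iff.1 hm₁
    obtain ⟨b, l₂, rfl, rfl, rfl⟩ := List.map_eq_cons_iff.1 hm₂
    rw [Sum.isLeft_map, Sum.isLeft_map] at hab
    obtain ⟨r, hr⟩ := exists_syllable_eq_mul hab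
    have hprod : ((l₁ ++ a :: b :: l₂).map syllable).prod =
        ((l₁ ++ r :: l₂).map syllable).prod := by
      simp [hr, mul_assoc]
    rw [hprod] at h1 ⊢
    exact ih (l₁ ++ r :: l₂).length (by simp) (hl.merge hr) h1 rfl

end Paths

section Connected

variable {P Q A B : Type*} [Group P] [Group Q] [Group A] [Group B] {S : Set (Coprod P Q)}

/-- Two elements of `S` are adjacent if they differ by right multiplication by a syllable. -/
def SyllableAdj (S : Set (Coprod P Q)) (c d : Coprod P Q) : Prop :=
  c ∈ S ∧ d ∈ S ∧ ∃ s, d = c * syllable s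

/-- Every element of `S` is joined to `1` by a path in the graph `SyllableAdj S`. -/
def SyllableConnected (S : Set (Coprod P Q)) : Prop :=
  ∀ c ∈ S, Relation.ReflTransGen (SyllableAdj S) 1 c

theorem exists_syllablePath {c d : Coprod P Q} (hc : c ∈ S)
    (h : Relation.ReflTransGen (SyllableAdj S) c d) :
    ∃ l, SyllablePath S c l ∧ d = c * (l.map syllable).prod := by
  induction h with
  | refl => exact ⟨[], hc, by simp⟩
  | tail _ hadj ih =>
    obtain ⟨l, hl, rfl⟩ := ih
    obtain ⟨hb, hd, s, rfl⟩ := hadj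
    exact ⟨l ++ [s], syllablePath_append.2 ⟨hl, hb, hd⟩, by simp [mul_assoc]⟩

theorem SyllableConnected.image_map (hS : SyllableConnected S) (f : P →* A) (g : Q →* B) :
    SyllableConnected (Coprod.map f g '' S) := by
  rintro _ ⟨c, hc, rfl⟩
  rw [← map_one (Coprod.map f g)]
  refine (hS c hc).lift _ ?_
  rintro c _ ⟨hc, hd, s, rfl⟩
  exact ⟨⟨c, hc, rfl⟩, ⟨_, hd, rfl⟩, s.map f g, by rw [map_mul, map_syllable]⟩

end Connected

section Vertices

variable {F W : Type*} [Group F]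

/-- The representatives `1` and `w`, for `w : W`, of the orbits of `F` on `vertices F W`. -/
def vertex : Option W → Coprod F (FreeGroup W)
  | none => 1
  | some w => Coprod.inr (FreeGroup.of w)

/-- The union of the cosets `F` and `F w`, for `w : W`, in the free product of `F` with the free
group on `W`. A splitting of that free product makes this set the vertices of a graph with an
`F`-action, see `SyllableAdj`. -/
def vertices (F W : Type*) [Group F] : Set (Coprod F (FreeGroup W)) :=
  {c | ∃ (g : F) (v : Option W), (Coprod.inl g : Coprod F (FreeGroup W)) * vertex v = c}

theorem inl_mul_mem_vertices (g : F) {c : Coprod F (FreeGroup W)} (hc : c ∈ vertices F W) :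
    Coprod.inl g * c ∈ vertices F W := by
  obtain ⟨h, v, rfl⟩ := hc
  exact ⟨g * h, v, by rw [map_mul, mul_assoc]⟩

theorem vertex_mem_vertices (v : Option W) : vertex v ∈ vertices F W :=
  ⟨1, v, by rw [map_one, one_mul]⟩

theorem vertex_injective_mod {g : F} {u v : Option W}
    (h : Coprod.inl g * vertex u = vertex v) : u = v := by
  have hsnd := congrArg Coprod.snd h
  rcases u with _ | u <;> rcases v with _ | v <;>
    simp only [vertex, map_mul, map_one, Coprod.snd_apply_inl, Coprod.snd_apply_inr,
      one_mul] at hsnd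
  · rfl
  · exact absurd hsnd.symm (FreeGroup.of_ne_one v)
  · exact absurd hsnd (FreeGroup.of_ne_one u)
  · rw [FreeGroup.of_injective hsnd]

end Vertices

section Tie

variable {F W : Type*} [Group F] {P Q : Type*} [Group P] [Group Q] {A B : Type u} [Group A]
  [Group B] {φ : F →* Coprod A B} {α : P →* A} {β : Q →* B}
  {e : Coprod F (FreeGroup W) ≃* Coprod P Q}

theorem exists_syllable_notMem_range [Nonempty W] (hφ : Function.Surjective φ)
    (hcomm : ∀ g, Coprod.map α β (e (Coprod.inl g)) = φ g)
    (hconn : SyllableConnected (e '' vertices F W)) :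
    ∃ c ∈ e '' vertices F W, ∃ s, c * syllable s ∈ e '' vertices F W ∧
      Coprod.map α β (syllable s) = 1 ∧
      c * syllable s * c⁻¹ ∉ (e.toMonoidHom.comp Coprod.inl).range := by
  by_contra! hno
  obtain ⟨w⟩ := ‹Nonempty W›
  obtain ⟨g, hg⟩ := hφ (Coprod.map α β (e (vertex (some w))))⁻¹
  have hinv : ∀ h ∈ (e.toMonoidHom.comp Coprod.inl).range, ∀ c ∈ e '' vertices F W,
      h * c ∈ e '' vertices F W := by
    rintro _ ⟨f, rfl⟩ _ ⟨c, hc, rfl⟩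
    exact ⟨_, inl_mul_mem_vertices f hc, map_mul e _ _⟩
  have hone : 1 ∈ e '' vertices F W := ⟨1, vertex_mem_vertices none, map_one e⟩
  obtain ⟨l, hl, hprod⟩ := exists_syllablePath hone
    (hconn _ ⟨_, inl_mul_mem_vertices g (vertex_mem_vertices (some w)), rfl⟩)
  rw [one_mul] at hprod
  have hker : Coprod.map α β (l.map syllable).prod = 1 := by
    rw [← hprod, map_mul, map_mul, hcomm, hg, inv_mul_cancel]
  obtain ⟨f, hf⟩ := hl.conj_prod_mem hinv hno hker
  rw [one_mul, inv_one, mul_one, ← hprod] at hf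
  have hvertex : Coprod.inl (f⁻¹ * g) * vertex (some w) = vertex none := by
    rw [map_mul, mul_assoc, ← e.injective hf, map_inv, inv_mul_cancel, vertex]
  exact Option.some_ne_none w (vertex_injective_mod hvertex)

theorem exists_tie [Nonempty W] (hφ : Function.Surjective φ)
    (hcomm : ∀ g, Coprod.map α β (e (Coprod.inl g)) = φ g)
    (hconn : SyllableConnected (e '' vertices F W)) :
    ∃ b f u s, u ≠ some b ∧ e (Coprod.inl f * vertex u) * syllable s = e (vertex (some b)) ∧
      Coprod.map α β (syllable s) = 1 := by
  obtain ⟨_, ⟨_, ⟨g, u, rfl⟩, rfl⟩, s, ⟨_, ⟨h, v, rfl⟩, hs⟩, hs1, hne⟩ :=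
    exists_syllable_notMem_range hφ hcomm hconn
  have huv : u ≠ v := by
    rintro rfl
    exact hne ⟨h * g⁻¹, by rw [← hs, ← map_inv, ← map_mul]; simp [mul_assoc]⟩
  rcases v with _ | b
  · obtain ⟨b, rfl⟩ := Option.ne_none_iff_exists'.1 huv
    refine ⟨b, g⁻¹ * h, none, s.map (·⁻¹) (·⁻¹), nofun, ?_, ?_⟩
    · rw [syllable_map_inv, mul_inv_eq_iff_eq_mul, map_mul Coprod.inl, mul_assoc, map_mul, hs,
        ← mul_assoc, ← map_mul]
      simp
    · rw [syllable_map_inv, map_inv, hs1, inv_one]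
  · refine ⟨b, h⁻¹ * g, u, s, huv, ?_, hs1⟩
    rw [map_mul Coprod.inl, mul_assoc (Coprod.inl h⁻¹), map_mul e, mul_assoc (e _), ← hs,
      ← map_mul]
    simp

end Tie

section Kernels

variable {G A B P Q : Type*} [Group G] [Group A] [Group B] [Group P] [Group Q]

theorem comap_normalClosure_singleton (e : G ≃* A) (g : G) :
    (Subgroup.normalClosure {e g}).comap e.toMonoidHom = Subgroup.normalClosure {g} := by
  refine (Subgroup.comap_normalClosure _ e).symm.trans ?_
  rw [← Set.image_singleton, e.injective.preimage_image]

theorem exists_mulEquiv_of_ker_eq {f : G →* A} {g : G →* B} (hf : Function.Surjective f)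
    (hg : Function.Surjective g) (h : f.ker = g.ker) : ∃ e : A ≃* B, ∀ x, e (f x) = g x := by
  refine ⟨(QuotientGroup.quotientKerEquivOfSurjective f hf).symm.trans
    ((QuotientGroup.quotientMulEquivOfEq h).trans
      (QuotientGroup.quotientKerEquivOfSurjective g hg)), fun x => ?_⟩
  have hx : (QuotientGroup.quotientKerEquivOfSurjective f hf).symm (f x) = (x : G ⧸ f.ker) :=
    (MulEquiv.symm_apply_eq _).2 rfl
  simp only [MulEquiv.trans_apply, hx]
  rfl

theorem coprodMap_surjective {f : P →* A} {g : Q →* B} (hf : Function.Surjective f)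
    (hg : Function.Surjective g) : Function.Surjective (Coprod.map f g) := by
  rw [← MonoidHom.range_eq_top, eq_top_iff, ← Coprod.range_inl_sup_range_inr, sup_le_iff]
  constructor
  · rintro _ ⟨a, rfl⟩
    obtain ⟨p, rfl⟩ := hf a
    exact ⟨Coprod.inl p, rfl⟩
  · rintro _ ⟨b, rfl⟩
    obtain ⟨q, rfl⟩ := hg b
    exact ⟨Coprod.inr q, rfl⟩

theorem ker_coprodMap {f : P →* A} {g : Q →* B} (hf : Function.Surjective f)
    (hg : Function.Surjective g) {s : Set P} {t : Set Q} (hs : f.ker = Subgroup.normalClosure s)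
    (ht : g.ker = Subgroup.normalClosure t) :
    (Coprod.map f g).ker = Subgroup.normalClosure (Coprod.inl '' s ∪ Coprod.inr '' t) := by
  set N := Subgroup.normalClosure (Coprod.inl '' s ∪ Coprod.inr '' t : Set (Coprod P Q))
  apply le_antisymm
  · have hsN : f.ker ≤ ((QuotientGroup.mk' N).comp Coprod.inl).ker := by
      rw [hs]
      exact Subgroup.normalClosure_le_normal fun p hp => (QuotientGroup.eq_one_iff _).2
        (Subgroup.subset_normalClosure (.inl ⟨p, hp, rfl⟩))
    have htN : g.ker ≤ ((QuotientGroup.mk' N).comp Coprod.inr).ker := by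
      rw [ht]
      exact Subgroup.normalClosure_le_normal fun q hq => (QuotientGroup.eq_one_iff _).2
        (Subgroup.subset_normalClosure (.inr ⟨q, hq, rfl⟩))
    have hmk : (Coprod.lift (f.liftOfSurjective hf ⟨_, hsN⟩)
        (g.liftOfSurjective hg ⟨_, htN⟩)).comp (Coprod.map f g) = QuotientGroup.mk' N := by
      apply Coprod.hom_ext <;> ext x
      · exact f.liftOfRightInverse_comp_apply _ (Function.rightInverse_surjInv hf) ⟨_, hsN⟩ x
      · exact g.liftOfRightInverse_comp_apply _ (Function.rightInverse_surjInv hg) ⟨_, htN⟩ x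
    intro x hx
    rw [← QuotientGroup.eq_one_iff, ← QuotientGroup.mk'_apply, ← hmk, MonoidHom.comp_apply,
      MonoidHom.mem_ker.1 hx, map_one]
  · refine Subgroup.normalClosure_le_normal ?_
    rintro _ (⟨p, hp, rfl⟩ | ⟨q, hq, rfl⟩)
    · have hfp : p ∈ f.ker := hs ▸ Subgroup.subset_normalClosure hp
      simp [MonoidHom.mem_ker.1 hfp]
    · have hgq : q ∈ g.ker := ht ▸ Subgroup.subset_normalClosure hq
      simp [MonoidHom.mem_ker.1 hgq]

end Kernels

section KillSyllable

variable {P Q : Type u} [Group P] [Group Q] {A B : Type v} [Group A] [Group B]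

theorem exists_coprodMap_ker_eq_normalClosure_syllable (α : P →* A) (β : Q →* B) {s : P ⊕ Q}
    (hs : Coprod.map α β (syllable s) = 1) :
    ∃ (P' Q' : Type u) (_ : Group P') (_ : Group Q') (f : P →* P') (g : Q →* Q') (α' : P' →* A)
      (β' : Q' →* B), Function.Surjective f ∧ Function.Surjective g ∧ α'.comp f = α ∧
      β'.comp g = β ∧ (Coprod.map f g).ker = Subgroup.normalClosure {syllable s} := by
  have hα : Subgroup.normalClosure {p | Sum.inl p = s} ≤ α.ker := by
    refine Subgroup.normalClosure_le_normal ?_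
    rintro p rfl
    exact Coprod.inl_injective (hs.trans (map_one _).symm)
  have hβ : Subgroup.normalClosure {q | Sum.inr q = s} ≤ β.ker := by
    refine Subgroup.normalClosure_le_normal ?_
    rintro q rfl
    exact Coprod.inr_injective (hs.trans (map_one _).symm)
  refine ⟨_, _, inferInstance, inferInstance, QuotientGroup.mk' _, QuotientGroup.mk' _,
    QuotientGroup.lift _ α hα, QuotientGroup.lift _ β hβ, QuotientGroup.mk'_surjective _,
    QuotientGroup.mk'_surjective _, rfl, rfl, ?_⟩
  rw [ker_coprodMap (QuotientGroup.mk'_surjective _) (QuotientGroup.mk'_surjective _)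
    (QuotientGroup.ker_mk' _) (QuotientGroup.ker_mk' _)]
  congr 1
  cases s <;> ext <;> simp [syllable, eq_comm]

end KillSyllable

section Collapse

variable {F W : Type*} [Group F] {b : W} {f : F} {u : Option {w : W // w ≠ b}}

open Classical in
/-- The retraction of `F ∗ FreeGroup W` which eliminates the generator `b` by replacing it with
`f * vertex u`. -/
noncomputable def collapse (b : W) (f : F) (u : Option {w : W // w ≠ b}) :
    Coprod F (FreeGroup W) →* Coprod F (FreeGroup {w : W // w ≠ b}) :=
  Coprod.lift Coprod.inl (FreeGroup.lift fun w =>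
    if h : w = b then Coprod.inl f * vertex u else Coprod.inr (FreeGroup.of ⟨w, h⟩))

theorem collapse_inl (g : F) : collapse b f u (Coprod.inl g) = Coprod.inl g :=
  Coprod.lift_apply_inl ..

theorem collapse_vertex_self : collapse b f u (vertex (some b)) = Coprod.inl f * vertex u := by
  simp [collapse, vertex]

theorem collapse_vertex_map_val (v : Option {w : W // w ≠ b}) :
    collapse b f u (vertex (v.map Subtype.val)) = vertex v := by
  rcases v with _ | ⟨w, hw⟩
  · exact map_one _
  · simp [collapse, vertex, hw]

theorem exists_map_val_eq {v : Option W} (hv : v ≠ some b) :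
    ∃ v' : Option {w : W // w ≠ b}, v'.map Subtype.val = v := by
  rcases v with _ | w
  · exact ⟨none, rfl⟩
  · exact ⟨some ⟨w, fun h => hv (congrArg some h)⟩, rfl⟩

theorem collapse_image_vertices : collapse b f u '' vertices F W = vertices F {w : W // w ≠ b} := by
  apply Set.Subset.antisymm
  · rintro _ ⟨_, ⟨g, v, rfl⟩, rfl⟩
    rw [map_mul, collapse_inl]
    refine inl_mul_mem_vertices g ?_
    by_cases hv : v = some b
    · rw [hv, collapse_vertex_self]
      exact ⟨f, u, rfl⟩
    · obtain ⟨v, rfl⟩ := exists_map_val_eq hv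
      rw [collapse_vertex_map_val]
      exact vertex_mem_vertices v
  · rintro _ ⟨g, v, rfl⟩
    exact ⟨_, ⟨g, v.map Subtype.val, rfl⟩, by
      rw [map_mul, collapse_inl, collapse_vertex_map_val]⟩

/-- The inclusion which is a section of `collapse b f u`. -/
def extend (F : Type*) [Group F] (b : W) :
    Coprod F (FreeGroup {w : W // w ≠ b}) →* Coprod F (FreeGroup W) :=
  Coprod.map (MonoidHom.id F) (FreeGroup.map Subtype.val)

theorem extend_vertex (v : Option {w : W // w ≠ b}) :
    extend F b (vertex v) = vertex (v.map Subtype.val) := by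
  cases v <;> simp [extend, vertex]

theorem extend_inl (g : F) : extend F b (Coprod.inl g) = Coprod.inl g :=
  Coprod.map_apply_inl ..

theorem collapse_extend (c : Coprod F (FreeGroup {w : W // w ≠ b})) :
    collapse b f u (extend F b c) = c := by
  suffices h : (collapse b f u).comp (extend F b) = MonoidHom.id _ from DFunLike.congr_fun h c
  refine Coprod.hom_ext (MonoidHom.ext fun g => ?_) (FreeGroup.ext_hom _ _ fun w => ?_)
  · exact congrArg (collapse b f u) (extend_inl (b := b) g) |>.trans (collapse_inl g)
  · exact congrArg (collapse b f u) (extend_vertex (some w)) |>.trans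
      (collapse_vertex_map_val (some w))

theorem ker_collapse : (collapse b f u).ker = Subgroup.normalClosure
    {(Coprod.inl f * vertex (u.map Subtype.val))⁻¹ * vertex (some b)} := by
  set t : Coprod F (FreeGroup W) := (Coprod.inl f * vertex (u.map Subtype.val))⁻¹ * vertex (some b)
    with ht
  apply le_antisymm
  · have hsection : (QuotientGroup.mk' (Subgroup.normalClosure {t})).comp
        ((extend F b).comp (collapse b f u)) = QuotientGroup.mk' _ := by
      refine Coprod.hom_ext (MonoidHom.ext fun g => ?_) (FreeGroup.ext_hom _ _ fun w => ?_)
      · simp [collapse_inl, extend_inl]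
      · change QuotientGroup.mk' _ (extend F b (collapse b f u (vertex (some w)))) =
          QuotientGroup.mk' _ (vertex (some w))
        by_cases hw : some w = some b
        · rw [hw, collapse_vertex_self, map_mul (extend F b), extend_inl, extend_vertex]
          exact QuotientGroup.eq.2 (self_mem_normalClosure t)
        · obtain ⟨v, hv⟩ := exists_map_val_eq hw
          rw [← hv, collapse_vertex_map_val, extend_vertex]
    intro x hx
    rw [← QuotientGroup.eq_one_iff, ← QuotientGroup.mk'_apply, ← hsection, MonoidHom.comp_apply,
      MonoidHom.comp_apply, MonoidHom.mem_ker.1 hx, map_one, map_one]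
  · refine normalClosure_singleton_le ?_
    rw [MonoidHom.mem_ker, ht, map_mul, map_inv, map_mul, collapse_inl, collapse_vertex_map_val,
      collapse_vertex_self, inv_mul_cancel]

end Collapse

section Grushko

variable {F W : Type u} [Group F] {A B : Type v} [Group A] [Group B] {φ : F →* Coprod A B}

/-- After adjoining the free factor `FreeGroup W`, the homomorphism `φ : F →* A ∗ B` becomes induced
by homomorphisms `P →* A` and `Q →* B` for a splitting `F ∗ FreeGroup W ≃* P ∗ Q`, in such a way
that `vertices F W` is connected in the graph of that splitting. Grushko's theorem is proved by
shrinking `W`. -/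
def SplitsAfterAdjoining (φ : F →* Coprod A B) (W : Type u) : Prop :=
  ∃ (P Q : Type u) (_ : Group P) (_ : Group Q) (α : P →* A) (β : Q →* B)
    (e : Coprod F (FreeGroup W) ≃* Coprod P Q),
    (∀ g, Coprod.map α β (e (Coprod.inl g)) = φ g) ∧ SyllableConnected (e '' vertices F W)

theorem SplitsAfterAdjoining.of_tie {P Q : Type u} [Group P] [Group Q] {α : P →* A} {β : Q →* B}
    {e : Coprod F (FreeGroup W) ≃* Coprod P Q}
    (hcomm : ∀ g, Coprod.map α β (e (Coprod.inl g)) = φ g)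
    (hconn : SyllableConnected (e '' vertices F W)) {b : W} {f : F}
    {u : Option {w : W // w ≠ b}} {s : P ⊕ Q}
    (htie : e (Coprod.inl f * vertex (u.map Subtype.val)) * syllable s = e (vertex (some b)))
    (hs : Coprod.map α β (syllable s) = 1) : SplitsAfterAdjoining φ {w : W // w ≠ b} := by
  obtain ⟨P', Q', _, _, p, q, α', β', hp, hq, rfl, rfl, hpq⟩ :=
    exists_coprodMap_ker_eq_normalClosure_syllable α β hs
  have hker : (collapse b f u).ker = ((Coprod.map p q).comp e.toMonoidHom).ker := by
    have hs' : syllable s =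
        e ((Coprod.inl f * vertex (u.map Subtype.val))⁻¹ * vertex (some b)) := by
      rw [map_mul, map_inv, ← htie, inv_mul_cancel_left]
    rw [ker_collapse, ← MonoidHom.comap_ker, hpq, hs', comap_normalClosure_singleton]
  obtain ⟨e', he'⟩ := exists_mulEquiv_of_ker_eq
    (Function.RightInverse.surjective collapse_extend)
    ((coprodMap_surjective hp hq).comp e.surjective) hker
  refine ⟨P', Q', _, _, α', β', e', fun g => ?_, ?_⟩
  · rw [← hcomm, ← collapse_inl (b := b) (f := f) (u := u) g, he']
    exact Coprod.map_map ..
  · rw [← collapse_image_vertices (f := f) (u := u), Set.image_image]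
    simp only [he']
    have := hconn.image_map p q
    rw [Set.image_image] at this
    exact this

theorem SplitsAfterAdjoining.exists_remove [Nonempty W] (h : SplitsAfterAdjoining φ W)
    (hφ : Function.Surjective φ) : ∃ b, SplitsAfterAdjoining φ {w : W // w ≠ b} := by
  obtain ⟨P, Q, _, _, α, β, e, hcomm, hconn⟩ := h
  obtain ⟨b, f, u, s, hub, htie, hs⟩ := exists_tie hφ hcomm hconn
  obtain ⟨u, rfl⟩ := exists_map_val_eq hub
  exact ⟨b, .of_tie hcomm hconn htie hs⟩

theorem SplitsAfterAdjoining.exists_mulEquiv [Finite W] (h : SplitsAfterAdjoining φ W)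
    (hφ : Function.Surjective φ) :
    ∃ (P Q : Type u) (_ : Group P) (_ : Group Q) (α : P →* A) (β : Q →* B) (e : F ≃* Coprod P Q),
      ∀ g, Coprod.map α β (e g) = φ g := by
  induction hn : Nat.card W using Nat.strong_induction_on generalizing W with | _ n ih
  rcases isEmpty_or_nonempty W with hW | hW
  · obtain ⟨P, Q, _, _, α, β, e, hcomm, -⟩ := h
    let i : F ≃* Coprod F (FreeGroup W) := MonoidHom.toMulEquiv Coprod.inl Coprod.fst
      Coprod.fst_comp_inl (Coprod.hom_ext rfl (Subsingleton.elim _ _))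
    exact ⟨P, Q, _, _, α, β, i.trans e, hcomm⟩
  · obtain ⟨b, hb⟩ := h.exists_remove hφ
    exact ih _ (hn ▸ Finite.card_subtype_lt (x := b) (by simp)) hb rfl

end Grushko

section FreeProductOfFreeGroups

variable {X Y Z : Type*}

/-- The free product of two free groups is the free group on the disjoint union of the bases. -/
def coprodFreeGroupEquiv : Coprod (FreeGroup Y) (FreeGroup Z) ≃* FreeGroup (Y ⊕ Z) :=
  MonoidHom.toMulEquiv (Coprod.lift (FreeGroup.map Sum.inl) (FreeGroup.map Sum.inr))
    (FreeGroup.lift (Sum.elim (Coprod.inl ∘ FreeGroup.of) (Coprod.inr ∘ FreeGroup.of)))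
    (by ext <;> simp) (by ext (_ | _) <;> simp)

theorem coprodFreeGroupEquiv_inl (p : FreeGroup Y) :
    (coprodFreeGroupEquiv (Coprod.inl p) : FreeGroup (Y ⊕ Z)) = FreeGroup.map Sum.inl p :=
  Coprod.lift_apply_inl (FreeGroup.map Sum.inl) (FreeGroup.map Sum.inr) p

/-- The decomposition of a free group given by splitting its basis into two parts. -/
def splitEquiv (p : X → Prop) [DecidablePred p] :
    Coprod (FreeGroup {x // p x}) (FreeGroup {x // ¬p x}) ≃* FreeGroup X :=
  coprodFreeGroupEquiv.trans (FreeGroup.freeGroupCongr (Equiv.sumCompl p))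

variable {p : X → Prop} [DecidablePred p]

theorem splitEquiv_inl (g : FreeGroup {x // p x}) :
    splitEquiv p (Coprod.inl g) = FreeGroup.map Subtype.val g := by
  change FreeGroup.map (Equiv.sumCompl p) (coprodFreeGroupEquiv (Coprod.inl g)) = _
  rw [coprodFreeGroupEquiv_inl, FreeGroup.map.comp]
  rfl

theorem splitEquiv_syllable (x : {x // p x} ⊕ {x // ¬p x}) :
    splitEquiv p (syllable (x.map FreeGroup.of FreeGroup.of)) =
      FreeGroup.of (Equiv.sumCompl p x) := by
  cases x <;> simp [splitEquiv, coprodFreeGroupEquiv, syllable]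

end FreeProductOfFreeGroups

section Subdivision

variable {X : Type*} {n : ℕ}

/-- The vertices of the path that subdivides the loop of the generator `x` into `n + 1` edges. The
last vertex is the translate by `x` of the first one. -/
def subdivision (x : X) : Fin (n + 2) → Coprod (FreeGroup X) (FreeGroup (X × Fin n)) :=
  Fin.cons 1 (Fin.snoc (fun i => vertex (some (x, i))) (Coprod.inl (FreeGroup.of x)))

theorem subdivision_zero (x : X) : subdivision x 0 = (1 : Coprod _ (FreeGroup (X × Fin n))) :=
  Fin.cons_zero ..

theorem subdivision_succ_castSucc (x : X) (i : Fin n) :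
    subdivision x i.castSucc.succ = vertex (some (x, i)) :=
  (Fin.cons_succ ..).trans (Fin.snoc_castSucc ..)

theorem subdivision_last (x : X) :
    subdivision x (Fin.last (n + 1)) = Coprod.inl (FreeGroup.of x) :=
  (Fin.cons_succ _ _ (Fin.last n)).trans (Fin.snoc_last ..)

theorem subdivision_mem_vertices (x : X) (i : Fin (n + 2)) :
    subdivision x i ∈ vertices (FreeGroup X) (X × Fin n) := by
  cases i using Fin.cases with
  | zero => exact subdivision_zero (n := n) x ▸ vertex_mem_vertices none
  | succ i =>
    cases i using Fin.lastCases with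
    | last =>
      rw [Fin.succ_last, subdivision_last]
      exact ⟨_, none, mul_one _⟩
    | cast i => exact subdivision_succ_castSucc x i ▸ vertex_mem_vertices _

/-- The free group on `X × Fin (n + 1)` maps to the fundamental group of the subdivided rose, whose
edges are the generators, with the inner vertices attached to the base vertex by `FreeGroup
(X × Fin n)`. -/
def ofSubdivision (X : Type*) (n : ℕ) :
    FreeGroup (X × Fin (n + 1)) →* Coprod (FreeGroup X) (FreeGroup (X × Fin n)) :=
  FreeGroup.lift fun w => (subdivision w.1 w.2.castSucc)⁻¹ * subdivision w.1 w.2.succ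

theorem ofSubdivision_partialProd (x : X) (i : Fin (n + 2)) :
    ofSubdivision X n (Fin.partialProd (fun j => FreeGroup.of (x, j)) i) = subdivision x i := by
  induction i using Fin.induction with
  | zero => rw [Fin.partialProd_zero, subdivision_zero, map_one]
  | succ i ih =>
    rw [Fin.partialProd_succ, map_mul, ih, ofSubdivision, FreeGroup.lift_apply_of,
      mul_inv_cancel_left]

theorem exists_subdivisionEquiv (X : Type*) (n : ℕ) :
    ∃ e : Coprod (FreeGroup X) (FreeGroup (X × Fin n)) ≃* FreeGroup (X × Fin (n + 1)),
      ∀ x i, e (subdivision x i) = Fin.partialProd (fun j => FreeGroup.of (x, j)) i := by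
  let path (x : X) : Fin (n + 2) → FreeGroup (X × Fin (n + 1)) :=
    Fin.partialProd fun j => FreeGroup.of (x, j)
  let f : Coprod (FreeGroup X) (FreeGroup (X × Fin n)) →* FreeGroup (X × Fin (n + 1)) :=
    Coprod.lift (FreeGroup.lift fun x => path x (Fin.last _))
      (FreeGroup.lift fun w => path w.1 w.2.castSucc.succ)
  have hf : ∀ x i, f (subdivision x i) = path x i := fun x i => by
    cases i using Fin.cases with
    | zero => simp [subdivision_zero, path]
    | succ i =>
      cases i using Fin.lastCases with
      | last => simp [f, subdivision_last]
      | cast i => simp [f, subdivision_succ_castSucc, vertex]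
  refine ⟨f.toMulEquiv (ofSubdivision X n) ?_ ?_, hf⟩
  · apply Coprod.hom_ext <;> ext w
    · simp [f, path, ofSubdivision_partialProd, subdivision_last]
    · simp [f, path, ofSubdivision_partialProd, subdivision_succ_castSucc, vertex]
  · ext w
    simp only [MonoidHom.comp_apply, ofSubdivision, FreeGroup.lift_apply_of, map_mul, map_inv, hf,
      path, Fin.partialProd_right_inv, MonoidHom.id_apply]

end Subdivision

section Connectivity

variable {P Q : Type*} [Group P] [Group Q] {S : Set (Coprod P Q)}

theorem SyllableAdj.symm {c d : Coprod P Q} (h : SyllableAdj S c d) : SyllableAdj S d c := by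
  obtain ⟨hc, hd, s, rfl⟩ := h
  exact ⟨hd, hc, s.map (·⁻¹) (·⁻¹), by rw [syllable_map_inv, mul_inv_cancel_right]⟩

instance : Std.Symm (SyllableAdj S) :=
  ⟨fun _ _ => SyllableAdj.symm⟩

theorem reflTransGen_mul_left {h c d : Coprod P Q} (hS : ∀ c ∈ S, h * c ∈ S)
    (hcd : Relation.ReflTransGen (SyllableAdj S) c d) :
    Relation.ReflTransGen (SyllableAdj S) (h * c) (h * d) := by
  refine hcd.lift _ ?_
  rintro c _ ⟨hc, hd, s, rfl⟩
  exact ⟨hS _ hc, hS _ hd, s, (mul_assoc ..).symm⟩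

theorem syllableConnected_image_vertices {X W : Type*}
    {e : Coprod (FreeGroup X) (FreeGroup W) ≃* Coprod P Q}
    (hgen : ∀ x, Relation.ReflTransGen (SyllableAdj (e '' vertices (FreeGroup X) W)) 1
      (e (Coprod.inl (FreeGroup.of x))))
    (hvertex : ∀ w, Relation.ReflTransGen (SyllableAdj (e '' vertices (FreeGroup X) W)) 1
      (e (vertex (some w)))) :
    SyllableConnected (e '' vertices (FreeGroup X) W) := by
  have htranslate (g : FreeGroup X) : ∀ c ∈ e '' vertices (FreeGroup X) W,
      e (Coprod.inl g) * c ∈ e '' vertices (FreeGroup X) W := by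
    rintro _ ⟨c, hc, rfl⟩
    exact ⟨_, inl_mul_mem_vertices g hc, map_mul ..⟩
  have hinl (g : FreeGroup X) : Relation.ReflTransGen
      (SyllableAdj (e '' vertices (FreeGroup X) W)) 1 (e (Coprod.inl g)) := by
    induction g using FreeGroup.induction_on with
    | C1 => rw [map_one, map_one]
    | of x => exact hgen x
    | inv_of x h =>
      have h' := reflTransGen_mul_left (htranslate (FreeGroup.of x)⁻¹) h
      rw [← map_mul, ← map_mul, inv_mul_cancel, map_one, map_one, mul_one] at h'
      exact Std.Symm.symm _ _ h'
    | mul g h hg hh =>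
      have h' := reflTransGen_mul_left (htranslate g) hh
      rw [mul_one, ← map_mul, ← map_mul] at h'
      exact hg.trans h'
  rintro _ ⟨_, ⟨g, v, rfl⟩, rfl⟩
  rcases v with _ | w
  · exact (congrArg e (mul_one _)).symm ▸ hinl g
  · have h' := reflTransGen_mul_left (htranslate g) (hvertex w)
    rw [mul_one, ← map_mul] at h'
    exact (hinl g).trans h'

theorem reflTransGen_subdivision {X : Type*} {n : ℕ}
    {e : Coprod (FreeGroup X) (FreeGroup (X × Fin n)) ≃* Coprod P Q}
    (hadj : ∀ x i, ∃ s, e (subdivision x (Fin.succ i)) =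
      e (subdivision x i.castSucc) * syllable s) (x : X) (i : Fin (n + 2)) :
    Relation.ReflTransGen (SyllableAdj (e '' vertices (FreeGroup X) (X × Fin n))) 1
      (e (subdivision x i)) := by
  induction i using Fin.induction with
  | zero => rw [subdivision_zero, map_one]
  | succ i ih => exact ih.tail ⟨⟨_, subdivision_mem_vertices x _, rfl⟩,
      ⟨_, subdivision_mem_vertices x _, rfl⟩, hadj x i⟩

end Connectivity

section Initial

variable {X : Type u} {A B : Type v} [Group A] [Group B]

/- Cut the loop of each generator `x` into edges, one for each syllable of a word for `φ x`, and
distribute the edges to the two factors. -/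
theorem splitsAfterAdjoining_of_prod_ofFn_syllable_eq {φ : FreeGroup X →* Coprod A B} {n : ℕ}
    {s : X → Fin (n + 1) → A ⊕ B}
    (hs : ∀ x, (List.ofFn (syllable ∘ s x)).prod = φ (FreeGroup.of x)) :
    SplitsAfterAdjoining φ (X × Fin n) := by
  obtain ⟨e, he⟩ := exists_subdivisionEquiv X n
  let p : X × Fin (n + 1) → Prop := fun w => (s w.1 w.2).isLeft
  let α : FreeGroup {w // p w} →* A := FreeGroup.lift fun w => (s w.1.1 w.1.2).getLeft w.2
  let β : FreeGroup {w // ¬p w} →* B :=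
    FreeGroup.lift fun w => (s w.1.1 w.1.2).getRight (Sum.not_isLeft.1 w.2)
  have hof : ∀ w, ∃ t, (splitEquiv p).symm (FreeGroup.of w) = syllable t ∧
      t.map α β = s w.1 w.2 := fun w => by
    obtain ⟨t, rfl⟩ := (Equiv.sumCompl p).surjective w
    refine ⟨_, (MulEquiv.symm_apply_eq _).2 (splitEquiv_syllable t).symm, ?_⟩
    cases t <;> simp [α, β]
  choose t ht hts using hof
  refine ⟨_, _, _, _, α, β, e.trans (splitEquiv p).symm, ?_, ?_⟩
  · refine DFunLike.congr_fun (f := (Coprod.map α β).comp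
      ((e.trans (splitEquiv p).symm).toMonoidHom.comp Coprod.inl)) ?_
    ext x
    have hlast := he x (Fin.last _)
    rw [subdivision_last, Fin.partialProd, Fin.val_last, List.take_of_length_le (by simp)] at hlast
    simp only [MonoidHom.comp_apply, MulEquiv.coe_toMonoidHom, MulEquiv.trans_apply, hlast,
      map_list_prod, List.map_ofFn, Function.comp_def, ht, map_syllable, hts, ← hs]
  · have hconn := reflTransGen_subdivision (e := e.trans (splitEquiv p).symm) fun x i =>
      ⟨t (x, i), by
        simp only [MulEquiv.trans_apply, he, Fin.partialProd_succ, map_mul, ht]⟩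
    refine syllableConnected_image_vertices (fun x => ?_) fun w => ?_
    · exact subdivision_last (n := n) x ▸ hconn x _
    · exact subdivision_succ_castSucc w.1 w.2 ▸ hconn w.1 _

theorem exists_splitsAfterAdjoining [Finite X] (φ : FreeGroup X →* Coprod A B) :
    ∃ n, SplitsAfterAdjoining φ (X × Fin n) := by
  choose k hk using fun x => exists_prod_ofFn_syllable_eq (φ (FreeGroup.of x))
  obtain ⟨n, hn⟩ := (Set.finite_range k).bddAbove
  choose s hs using fun x => hk x (n + 1) ((hn ⟨x, rfl⟩).trans n.le_succ)
  exact ⟨n, splitsAfterAdjoining_of_prod_ofFn_syllable_eq hs⟩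

theorem grushko [Finite X] {φ : FreeGroup X →* Coprod A B} (hφ : Function.Surjective φ) :
    ∃ (Y Z : Type u) (α : FreeGroup Y →* A) (β : FreeGroup Z →* B)
      (e : FreeGroup X ≃* Coprod (FreeGroup Y) (FreeGroup Z)),
      ∀ g, Coprod.map α β (e g) = φ g := by
  obtain ⟨n, hn⟩ := exists_splitsAfterAdjoining φ
  obtain ⟨P, Q, _, _, α, β, e, he⟩ := hn.exists_mulEquiv hφ
  have hP : Function.Injective (e.symm.toMonoidHom.comp (Coprod.inl : P →* Coprod P Q)) :=
    e.symm.injective.comp Coprod.inl_injective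
  have hQ : Function.Injective (e.symm.toMonoidHom.comp (Coprod.inr : Q →* Coprod P Q)) :=
    e.symm.injective.comp Coprod.inr_injective
  have : IsFreeGroup P := IsFreeGroup.ofMulEquiv (MonoidHom.ofInjective hP).symm
  have : IsFreeGroup Q := IsFreeGroup.ofMulEquiv (MonoidHom.ofInjective hQ).symm
  let f := IsFreeGroup.toFreeGroup P
  let g := IsFreeGroup.toFreeGroup Q
  refine ⟨_, _, α.comp f.symm.toMonoidHom, β.comp g.symm.toMonoidHom,
    e.trans (MulEquiv.coprodCongr f g), fun x => ?_⟩
  have hf : (α.comp f.symm.toMonoidHom).comp (f : P →* FreeGroup _) = α := by ext; simp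
  have hg : (β.comp g.symm.toMonoidHom).comp (g : Q →* FreeGroup _) = β := by ext; simp
  rw [← he, MulEquiv.trans_apply, MulEquiv.coprodCongr_apply, Coprod.map_map, hf, hg]

end Initial

section FreeFactor

variable {X : Type u} {R : FreeGroup X}

/-- The element `R` is conjugate into `P` for some decomposition of the free group as a free product
`P ∗ Q` with `P` and `Q` nontrivial. By Grushko's theorem and the Freiheitssatz this is what free
decomposability of `⟨X; R⟩` amounts to. -/
def InProperFreeFactor (R : FreeGroup X) : Prop :=
  ∃ (Y Z : Type u) (_ : Nonempty Y) (_ : Nonempty Z)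
    (e : FreeGroup X ≃* Coprod (FreeGroup Y) (FreeGroup Z)) (p : FreeGroup Y),
    IsConj (Coprod.inl p) (e R)

theorem InProperFreeFactor.of_mulEquiv {Y : Type u} (e : FreeGroup X ≃* FreeGroup Y)
    (h : InProperFreeFactor (e R)) : InProperFreeFactor R := by
  obtain ⟨Y, Z, hY, hZ, f, p, hp⟩ := h
  exact ⟨Y, Z, hY, hZ, e.trans f, p, hp⟩

theorem InProperFreeFactor.of_conjugateInto {A : Set X} (hA : A.Nonempty) (hA' : Aᶜ.Nonempty)
    (h : ConjugateInto (supported A) R) : InProperFreeFactor R := by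
  classical
  obtain ⟨u, hu, huR⟩ := h
  rw [← Subtype.range_coe (s := A), ← range_map_eq_supported] at hu
  obtain ⟨p, rfl⟩ := hu
  refine ⟨_, _, hA.to_subtype, hA'.to_subtype, (splitEquiv (· ∈ A)).symm, p, ?_⟩
  rw [← (splitEquiv (· ∈ A)).symm_apply_apply (Coprod.inl p), splitEquiv_inl]
  exact (splitEquiv (· ∈ A)).symm.toMonoidHom.map_isConj huR

theorem InProperFreeFactor.of_mem_normalClosure {Y : Type u} (e : FreeGroup X ≃* FreeGroup Y)
    {A : Set Y} (hA : A.Nonempty) (hA' : Aᶜ.Nonempty) {g : FreeGroup Y} (hg : g ∈ supported A)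
    (hg1 : g ≠ 1) (h : g ∈ Subgroup.normalClosure {e R}) : InProperFreeFactor R := by
  refine .of_mulEquiv e (.of_conjugateInto hA hA' (not_not.1 fun hR => hg1 ?_))
  exact Subgroup.disjoint_def.1 (freiheitssatz hR) hg h

theorem inProperFreeFactor_one [Nontrivial X] : InProperFreeFactor (1 : FreeGroup X) := by
  obtain ⟨x, y, hxy⟩ := exists_pair_ne X
  exact .of_conjugateInto (A := {x}) ⟨x, rfl⟩ ⟨y, hxy.symm⟩ ⟨1, one_mem _, IsConj.refl 1⟩

theorem inProperFreeFactor_of_infinite [Infinite X] (R : FreeGroup X) : InProperFreeFactor R := by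
  obtain ⟨A, hA, hR⟩ := exists_finite_mem_supported R
  obtain ⟨x⟩ := (inferInstance : Nonempty X)
  exact .of_conjugateInto (Set.insert_nonempty x A) (hA.insert x).infinite_compl.nonempty
    ⟨R, supported_mono (Set.subset_insert x A) hR, IsConj.refl R⟩

end FreeFactor

section Cyclic

variable {X : Type u} {x y : X}

theorem exists_transvection (hxy : x ≠ y) (k : ℤ) :
    ∃ τ : FreeGroup X ≃* FreeGroup X,
      τ (FreeGroup.of x) = FreeGroup.of x * FreeGroup.of y ^ k := by
  classical
  let f (k : ℤ) : FreeGroup X →* FreeGroup X :=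
    FreeGroup.lift (Function.update FreeGroup.of x (FreeGroup.of x * FreeGroup.of y ^ k))
  have hx (k : ℤ) : f k (FreeGroup.of x) = FreeGroup.of x * FreeGroup.of y ^ k := by simp [f]
  have hne {z : X} (hz : z ≠ x) (k : ℤ) : f k (FreeGroup.of z) = FreeGroup.of z := by simp [f, hz]
  have hcomp (k : ℤ) : (f k).comp (f (-k)) = MonoidHom.id _ := by
    ext z
    rcases eq_or_ne z x with rfl | hz
    · simp [hx, hne hxy.symm]
    · simp [hne hz]
  exact ⟨(f k).toMulEquiv (f (-k)) (by simpa using hcomp (-k)) (hcomp k), hx k⟩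

/- The Euclidean algorithm on the values of `ψ` at two generators. -/
theorem exists_mulEquiv_of_mem_ker (hxy : x ≠ y) (ψ : FreeGroup X →* Multiplicative ℤ) :
    ∃ (σ : FreeGroup X ≃* FreeGroup X) (z : X), σ (FreeGroup.of z) ∈ ψ.ker := by
  induction hn : (ψ (FreeGroup.of y)).toAdd.natAbs using Nat.strong_induction_on
    generalizing x y ψ with | _ n ih
  by_cases hy : (ψ (FreeGroup.of y)).toAdd = 0
  · exact ⟨MulEquiv.refl _, y, hy⟩
  obtain ⟨τ, hτ⟩ := exists_transvection hxy
    (-((ψ (FreeGroup.of x)).toAdd / (ψ (FreeGroup.of y)).toAdd))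
  have hmod : (ψ (τ (FreeGroup.of x))).toAdd =
      (ψ (FreeGroup.of x)).toAdd % (ψ (FreeGroup.of y)).toAdd := by
    rw [hτ, map_mul, map_zpow, toAdd_mul, toAdd_zpow, Int.emod_def, smul_eq_mul]
    ring
  have hlt : (ψ (τ (FreeGroup.of x))).toAdd.natAbs < n := by
    rw [hmod, ← hn, ← Int.ofNat_lt, Int.natCast_natAbs, Int.natCast_natAbs,
      abs_of_nonneg (Int.emod_nonneg _ hy)]
    exact Int.emod_lt_abs _ hy
  obtain ⟨σ, z, hz⟩ := ih _ hlt hxy.symm (ψ.comp τ.toMonoidHom) rfl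
  exact ⟨σ.trans τ, z, hz⟩

theorem InProperFreeFactor.of_ker_le [Nontrivial X] {R : FreeGroup X}
    {ψ : FreeGroup X →* Multiplicative ℤ} (hψ : ψ.ker ≤ Subgroup.normalClosure {R}) :
    InProperFreeFactor R := by
  obtain ⟨x, y, hxy⟩ := exists_pair_ne X
  obtain ⟨σ, z, hz⟩ := exists_mulEquiv_of_mem_ker hxy ψ
  obtain ⟨w, hw⟩ := exists_ne z
  refine .of_mem_normalClosure σ.symm (A := {z}) ⟨z, rfl⟩ ⟨w, hw⟩ (of_mem_supported rfl)
    (FreeGroup.of_ne_one z) ?_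
  have h := hψ hz
  rwa [← comap_normalClosure_singleton σ.symm, Subgroup.mem_comap, MulEquiv.coe_toMonoidHom,
    MulEquiv.symm_apply_apply] at h

end Cyclic

section Decomposable

theorem ker_presentedGroupMk {X : Type*} (S : Set (FreeGroup X)) :
    (PresentedGroup.mk S).ker = Subgroup.normalClosure S :=
  QuotientGroup.ker_mk' _

theorem surjective_and_surjective_of_coprodMap {P Q A B : Type*} [Group P] [Group Q] [Group A]
    [Group B] {α : P →* A} {β : Q →* B} (h : Function.Surjective (Coprod.map α β)) :
    Function.Surjective α ∧ Function.Surjective β := by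
  constructor
  · refine .of_comp (g := (Coprod.fst : Coprod P Q →* P)) ?_
    rw [← MonoidHom.coe_comp, ← fst_comp_coprodMap α β]
    exact Coprod.fst_surjective.comp h
  · refine .of_comp (g := (Coprod.snd : Coprod P Q →* Q)) ?_
    rw [← MonoidHom.coe_comp, ← snd_comp_coprodMap α β]
    exact Coprod.snd_surjective.comp h

variable {X : Type u} {A B : Type v} [Group A] [Group B]

theorem ker_eq_normalClosure_of_comp_mulEquiv {F G D : Type*} [Group F] [Group G] [Group D]
    {φ : F →* D} {ψ : G →* D} {S : F} (hker : φ.ker = Subgroup.normalClosure {S}) (e : F ≃* G)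
    (he : ∀ g, ψ (e g) = φ g) : ψ.ker = Subgroup.normalClosure {e S} := by
  refine Subgroup.comap_injective (f := e.toMonoidHom) e.surjective ?_
  rw [MonoidHom.comap_ker, comap_normalClosure_singleton, ← hker]
  exact congrArg MonoidHom.ker (MonoidHom.ext he)

theorem InProperFreeFactor.of_injective_right [Nontrivial B] {R S : FreeGroup X}
    (hS : S ≠ 1) (hSR : S ∈ Subgroup.normalClosure {R}) {φ : FreeGroup X →* Coprod A B}
    (hφ : Function.Surjective φ) (hφS : φ.ker = Subgroup.normalClosure {S}) {Y Z : Type u}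
    {α : FreeGroup Y →* A} {β : FreeGroup Z →* B}
    (e : FreeGroup X ≃* Coprod (FreeGroup Y) (FreeGroup Z))
    (he : ∀ g, Coprod.map α β (e g) = φ g) (hβ : Function.Injective β) :
    InProperFreeFactor R := by
  have hker := ker_eq_normalClosure_of_comp_mulEquiv hφS e he
  have hsurj : Function.Surjective (Coprod.map α β) :=
    .of_comp (g := e) (by rwa [show Coprod.map α β ∘ e = φ from funext he])
  obtain ⟨hα', hβ'⟩ := surjective_and_surjective_of_coprodMap hsurj
  have hα : ¬ Function.Injective α := fun hα => by
    have hinj : Function.Injective (Coprod.map α β) :=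
      (MulEquiv.coprodCongr (.ofBijective α ⟨hα, hα'⟩) (.ofBijective β ⟨hβ, hβ'⟩)).injective
    have heS : e S ∈ (Coprod.map α β).ker := hker ▸ self_mem_normalClosure _
    rw [(MonoidHom.ker_eq_bot_iff _).2 hinj, Subgroup.mem_bot] at heS
    exact hS ((map_eq_one_iff e e.injective).1 heS)
  obtain ⟨p, hp, hp1⟩ : ∃ p, α p = 1 ∧ p ≠ 1 := by
    rw [injective_iff_map_eq_one] at hα
    push Not at hα
    exact hα
  obtain ⟨y⟩ : Nonempty Y := not_isEmpty_iff.1 fun _ => hp1 (Subsingleton.elim _ _)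
  obtain ⟨z⟩ : Nonempty Z := not_isEmpty_iff.1 fun _ =>
    not_subsingleton B hβ'.subsingleton
  refine .of_mem_normalClosure (e.trans coprodFreeGroupEquiv) (A := Set.range Sum.inl)
    (g := FreeGroup.map Sum.inl p) ⟨_, y, rfl⟩ ⟨.inr z, by simp⟩ ?_ ?_ ?_
  · exact range_map_eq_supported (Sum.inl : Y → Y ⊕ Z) ▸ ⟨p, rfl⟩
  · rwa [← coprodFreeGroupEquiv_inl, Ne, map_eq_one_iff _ (MulEquiv.injective _),
      map_eq_one_iff _ Coprod.inl_injective]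
  · have hpS : Coprod.inl p ∈ Subgroup.normalClosure {e S} := by
      rw [← hker, MonoidHom.mem_ker, Coprod.map_apply_inl, hp, map_one]
    have heSR : Subgroup.normalClosure {e S} ≤ Subgroup.normalClosure {e R} := by
      refine normalClosure_singleton_le ?_
      rwa [← comap_normalClosure_singleton e, Subgroup.mem_comap] at hSR
    rw [← coprodFreeGroupEquiv_inl, MulEquiv.trans_apply]
    have h := heSR hpS
    rwa [← comap_normalClosure_singleton coprodFreeGroupEquiv, Subgroup.mem_comap] at h

theorem InProperFreeFactor.of_surjective [Nontrivial A] [Nontrivial B] {R S : FreeGroup X}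
    (hS : S ≠ 1) (hSR : S ∈ Subgroup.normalClosure {R}) {φ : FreeGroup X →* Coprod A B}
    (hφ : Function.Surjective φ) (hφS : φ.ker = Subgroup.normalClosure {S}) :
    InProperFreeFactor R := by
  rcases finite_or_infinite X with _ | _
  · obtain ⟨Y, Z, α, β, e, he⟩ := grushko hφ
    rcases injective_or_injective_of_ker_coprodMap
      (ker_eq_normalClosure_of_comp_mulEquiv hφS e he) with hα | hβ
    · refine .of_injective_right hS hSR (φ := (Coprod.swap A B).comp φ) (α := β)
        (Coprod.swap_surjective.comp hφ) ?_ (e.trans (MulEquiv.coprodComm _ _)) (fun g => ?_) hα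
      · rw [MonoidHom.ker_comp_of_injective φ _ Coprod.swap_injective, hφS]
      · rw [MonoidHom.comp_apply, ← he, Coprod.swap_map]
        rfl
    · exact .of_injective_right hS hSR hφ hφS e he hβ
  · exact inProperFreeFactor_of_infinite R

end Decomposable

section Quotient

variable {X : Type*}

theorem ker_mk_comp_presentedGroupMk {R S : FreeGroup X} (h : S ∈ Subgroup.normalClosure {R}) :
    ((QuotientGroup.mk' (Subgroup.normalClosure {PresentedGroup.mk {S} R})).comp
      (PresentedGroup.mk {S})).ker = Subgroup.normalClosure {R} := by
  rw [← MonoidHom.comap_ker, QuotientGroup.ker_mk', ← Set.image_singleton,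
    ← Subgroup.map_normalClosure _ _ (PresentedGroup.mk_surjective _), Subgroup.comap_map_eq,
    ker_presentedGroupMk, sup_eq_left]
  exact normalClosure_singleton_le h

theorem nonempty_quotient_mulEquiv_presentedGroup {R S : FreeGroup X}
    (h : S ∈ Subgroup.normalClosure {R}) :
    Nonempty (PresentedGroup {S} ⧸ Subgroup.normalClosure {PresentedGroup.mk {S} R} ≃*
      PresentedGroup {R}) :=
  (exists_mulEquiv_of_ker_eq
    (f := (QuotientGroup.mk' (Subgroup.normalClosure {PresentedGroup.mk {S} R})).comp
      (PresentedGroup.mk {S}))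
    ((QuotientGroup.mk'_surjective _).comp (PresentedGroup.mk_surjective {S}))
    (PresentedGroup.mk_surjective {R})
    ((ker_mk_comp_presentedGroupMk h).trans (ker_presentedGroupMk _).symm)).nonempty

theorem nonempty_presentedGroup_mulEquiv_coprod {Y Z : Type*} {R : FreeGroup X} {p : FreeGroup Y}
    (e : FreeGroup X ≃* Coprod (FreeGroup Y) (FreeGroup Z)) (h : IsConj (Coprod.inl p) (e R)) :
    Nonempty (PresentedGroup {R} ≃* Coprod (PresentedGroup {p}) (FreeGroup Z)) := by
  have hker : (Coprod.map (PresentedGroup.mk {p}) (MonoidHom.id (FreeGroup Z))).ker =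
      Subgroup.normalClosure {e R} := by
    rw [ker_coprodMap (t := ∅) (PresentedGroup.mk_surjective _) Function.surjective_id
      (ker_presentedGroupMk _) (by simp [MonoidHom.ker_id]), Set.image_empty, Set.union_empty,
      Set.image_singleton, normalClosure_eq_of_isConj h]
  obtain ⟨f, -⟩ := exists_mulEquiv_of_ker_eq (PresentedGroup.mk_surjective {R})
    ((coprodMap_surjective (PresentedGroup.mk_surjective {p}) Function.surjective_id).comp
      e.surjective)
    (g := (Coprod.map (PresentedGroup.mk {p}) (MonoidHom.id (FreeGroup Z))).comp e.toMonoidHom) (by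
      rw [ker_presentedGroupMk, ← MonoidHom.comap_ker, hker, comap_normalClosure_singleton])
  exact ⟨f⟩

end Quotient

section FreelyDecomposable

theorem freelyDecomposable_congr {G H : Type*} [Group G] [Group H] (e : G ≃* H) :
    FreelyDecomposable G ↔ FreelyDecomposable H := by
  constructor
  · rintro ⟨A, B, _, _, hA, hB, ⟨f⟩⟩
    exact ⟨A, B, _, _, hA, hB, ⟨e.symm.trans f⟩⟩
  · rintro ⟨A, B, _, _, hA, hB, ⟨f⟩⟩
    exact ⟨A, B, _, _, hA, hB, ⟨e.trans f⟩⟩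

theorem freelyDecomposable_freeGroup (X : Type) [Nontrivial X] :
    FreelyDecomposable (FreeGroup X) := by
  classical
  obtain ⟨x, y, hxy⟩ := exists_pair_ne X
  have : Nonempty {z // z = x} := ⟨x, rfl⟩
  have : Nonempty {z // ¬z = x} := ⟨y, hxy.symm⟩
  exact ⟨_, _, _, _, inferInstance, inferInstance, ⟨(splitEquiv (· = x)).symm⟩⟩

variable {X : Type} {R : FreeGroup X}

theorem InProperFreeFactor.freelyDecomposable_pow (h : InProperFreeFactor R) {n : ℕ} (hn : 1 < n) :
    FreelyDecomposable (PresentedGroup {R ^ n}) := by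
  obtain ⟨Y, Z, hY, hZ, e, p, hp⟩ := h
  have hpn : IsConj (Coprod.inl (p ^ n)) (e (R ^ n)) := by
    rw [map_pow, map_pow]
    exact hp.pow n
  refine ⟨_, _, _, _, ?_, inferInstance, nonempty_presentedGroup_mulEquiv_coprod e hpn⟩
  exact QuotientGroup.nontrivial_iff.2 (normalClosure_pow_ne_top p hn)

theorem InProperFreeFactor.mulEquiv_int_or_freelyDecomposable (h : InProperFreeFactor R) :
    Nonempty (PresentedGroup {R} ≃* Multiplicative ℤ) ∨
      FreelyDecomposable (PresentedGroup {R}) := by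
  obtain ⟨Y, Z, _, hZ, e, p, hp⟩ := h
  obtain ⟨f⟩ := nonempty_presentedGroup_mulEquiv_coprod e hp
  rcases subsingleton_or_nontrivial (PresentedGroup {p}) with _ | _
  · have := uniqueOfSubsingleton (1 : PresentedGroup {p})
    let g : PresentedGroup {R} ≃* FreeGroup Z := f.trans
      (((MulEquiv.ofUnique : PresentedGroup {p} ≃* PUnit.{1}).coprodCongr (.refl _)).trans
        (MulEquiv.punitCoprod _))
    rcases subsingleton_or_nontrivial Z with _ | _
    · have := uniqueOfSubsingleton hZ.some
      exact .inl ⟨g.trans FreeGroup.mulEquivIntOfUnique⟩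
    · exact .inr ((freelyDecomposable_congr g).2 (freelyDecomposable_freeGroup Z))
  · exact .inr ⟨_, _, _, _, inferInstance, inferInstance, ⟨f⟩⟩

theorem InProperFreeFactor.of_freelyDecomposable {S : FreeGroup X} (hS : S ≠ 1)
    (hSR : S ∈ Subgroup.normalClosure {R}) (h : FreelyDecomposable (PresentedGroup {S})) :
    InProperFreeFactor R := by
  obtain ⟨A, B, _, _, hA, hB, ⟨f⟩⟩ := h
  refine .of_surjective hS hSR (φ := f.toMonoidHom.comp (PresentedGroup.mk {S}))
    (f.surjective.comp (PresentedGroup.mk_surjective _)) ?_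
  rw [MonoidHom.ker_comp_of_injective _ _ f.injective, ker_presentedGroupMk]

theorem InProperFreeFactor.of_mulEquiv_int [Nontrivial X]
    (f : PresentedGroup {R} ≃* Multiplicative ℤ) : InProperFreeFactor R := by
  refine .of_ker_le (ψ := f.toMonoidHom.comp (PresentedGroup.mk {R})) (le_of_eq ?_)
  rw [MonoidHom.ker_comp_of_injective _ _ f.injective, ker_presentedGroupMk]

variable [Nontrivial X]

theorem InProperFreeFactor.of_freelyDecomposable_pow {n : ℕ} (hn : n ≠ 0)
    (h : FreelyDecomposable (PresentedGroup {R ^ n})) : InProperFreeFactor R := by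
  rcases eq_or_ne R 1 with rfl | hR
  · exact inProperFreeFactor_one
  · exact .of_freelyDecomposable (mt (pow_eq_one_iff_left hn).1 hR)
      (pow_mem (self_mem_normalClosure R) n) h

theorem inProperFreeFactor_iff_freelyDecomposable_pow {n : ℕ} (hn : 1 < n) :
    InProperFreeFactor R ↔ FreelyDecomposable (PresentedGroup {R ^ n}) :=
  ⟨fun h => h.freelyDecomposable_pow hn, .of_freelyDecomposable_pow (Nat.ne_zero_of_lt hn)⟩

theorem inProperFreeFactor_iff_mulEquiv_int_or_freelyDecomposable :
    InProperFreeFactor R ↔ Nonempty (PresentedGroup {R} ≃* Multiplicative ℤ) ∨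
      FreelyDecomposable (PresentedGroup {R}) := by
  refine ⟨fun h => h.mulEquiv_int_or_freelyDecomposable, ?_⟩
  rintro (⟨⟨f⟩⟩ | h)
  · exact .of_mulEquiv_int f
  · exact .of_freelyDecomposable_pow one_ne_zero (by rwa [pow_one])

end FreelyDecomposable

end OneRelator

open OneRelator in
theorem statement_0_general {X : Type} [Nontrivial X] (R : FreeGroup X) (n : ℕ) (hn : 1 < n) :
    FreelyDecomposable (PresentedGroup {R ^ n}) ↔
      (Nonempty ((PresentedGroup {R ^ n} ⧸
            Subgroup.normalClosure {PresentedGroup.mk {R ^ n} R}) ≃* Multiplicative ℤ) ∨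
        FreelyDecomposable (PresentedGroup {R ^ n} ⧸
            Subgroup.normalClosure {PresentedGroup.mk {R ^ n} R})) := by
  obtain ⟨e⟩ := nonempty_quotient_mulEquiv_presentedGroup (pow_mem (self_mem_normalClosure R) n)
  rw [freelyDecomposable_congr e, ← inProperFreeFactor_iff_freelyDecomposable_pow hn,
    inProperFreeFactor_iff_mulEquiv_int_or_freelyDecomposable]
  exact or_congr_left ⟨fun ⟨f⟩ => ⟨e.trans f⟩, fun ⟨f⟩ => ⟨e.symm.trans f⟩⟩

/-- Let `G = ⟨X; Rⁿ⟩` be a one-relator group with torsion on a finite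
generating set `X` (so `|X| > 1`, `n > 1`, and `R` is not a proper power), and let
`Ĝ = ⟨X; R⟩` be the quotient of `G` by the normal closure of the image of `R`.  Then
`G` is a free product of two nontrivial groups iff `Ĝ` is infinite cyclic or `Ĝ` is a
free product of two nontrivial groups. -/
theorem statement_0 {X : Type} [Finite X] [Nontrivial X] (R : FreeGroup X) (n : ℕ)
    (hn : 1 < n) (hR : ∀ (S : FreeGroup X) (k : ℕ), 1 ≤ k → R = S ^ k → k = 1) :
    FreelyDecomposable (PresentedGroup {R ^ n}) ↔
      (Nonempty ((PresentedGroup {R ^ n} ⧸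
            Subgroup.normalClosure {PresentedGroup.mk {R ^ n} R}) ≃* Multiplicative ℤ) ∨
        FreelyDecomposable (PresentedGroup {R ^ n} ⧸
            Subgroup.normalClosure {PresentedGroup.mk {R ^ n} R})) :=
  statement_0_general R n hn
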